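/- arXiv:2303.02013 — 7 statements merged into one kernel-verified Lean document; each statement's English description precedes it below -/
import Mathlib

section
/- Let F be a finite field with q elements, B a nondegenerate alternating bilinear form on V = F⁴, and let O be a set of points of ℙ(F, V) containing exactly one point of each totally isotropic two-dimensional subspace of V (an ovoid of W(q)). Then no three distinct points of O lie in a common two-dimensional subspace of V, and every three-dimensional subspace of V contains either exactly 1 or exactly q+1 points of O (i.e., O is an ovoid of PG(3,q)). -/
open Module Finset

section OvoidAux

variable {F V : Type*} [Field F] [AddCommGroup V] [Module F V]

theorem sub_le_iff (x : Projectivization F V) (M : Submodule F V) :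
    x.submodule ≤ M ↔ x.rep ∈ M := by
  rw [Projectivization.submodule_eq, Submodule.span_singleton_le_iff_mem]

theorem mk_rep_mem (v : V) (hv : v ≠ 0) (M : Submodule F V) :
    (Projectivization.mk F v hv).rep ∈ M ↔ v ∈ M := by
  rw [← sub_le_iff, Projectivization.submodule_mk, Submodule.span_singleton_le_iff_mem]

theorem eq_of_smul (x y : Projectivization F V) (a : F) (h : a • y.rep = x.rep) : x = y := by
  rw [← x.mk_rep, ← y.mk_rep, Projectivization.mk_eq_mk_iff']
  exact ⟨a, h⟩

theorem card_points [Finite F] (W : Submodule F V) :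
    {x : Projectivization F V | x.rep ∈ W}.ncard = Nat.card (Projectivization F W) := by
  have hinj := Projectivization.map_injective W.subtype W.subtype_injective
  rw [← Set.ncard_univ, ← Set.ncard_image_of_injective _ hinj]
  congr 1
  ext x
  simp only [Set.mem_ofPred_eq, Set.image_univ, Set.mem_range]
  constructor
  · intro h
    refine ⟨Projectivization.mk F ⟨x.rep, h⟩ (fun hc => x.rep_nonzero (congrArg Subtype.val hc)), ?_⟩
    rw [Projectivization.map_mk]
    exact x.mk_rep
  · rintro ⟨y, rfl⟩
    induction y with | h v hv =>
    rw [Projectivization.map_mk, mk_rep_mem]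
    exact v.2

theorem card_points_two [Finite F] (W : Submodule F V) (h : finrank F W = 2) :
    {x : Projectivization F V | x.rep ∈ W}.ncard = Nat.card F + 1 := by
  rw [card_points, Projectivization.card_of_finrank_two _ _ h]

theorem card_points_one [Finite F] (W : Submodule F V) (h : finrank F W = 1) :
    {x : Projectivization F V | x.rep ∈ W}.ncard = 1 := by
  rw [card_points, Projectivization.card_of_finrank _ _ h]
  simp

theorem finrank_inf_ker [FiniteDimensional F V] (f : V →ₗ[F] F) (W : Submodule F V)
    (h : ¬ W ≤ LinearMap.ker f) : finrank F ↥(W ⊓ LinearMap.ker f) + 1 = finrank F W := by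
  have hf : f ≠ 0 := by rintro rfl; exact h (by simp)
  have h1 := Module.Dual.finrank_ker_add_one_of_ne_zero (f := f) hf
  have h2 := Submodule.finrank_sup_add_finrank_inf_eq W (LinearMap.ker f)
  have h3 : finrank F (LinearMap.ker f) < finrank F ↥(W ⊔ LinearMap.ker f) := by
    apply Submodule.finrank_lt_finrank_of_lt
    refine lt_of_le_of_ne le_sup_right (fun he => h ?_)
    rw [he]; exact le_sup_left
  have h4 := Submodule.finrank_le (W ⊔ LinearMap.ker f)
  omega

theorem finrank_pair (x y : Projectivization F V) (h : x ≠ y) :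
    finrank F (Submodule.span F {x.rep, y.rep}) = 2 := by
  have := finrank_span_eq_card (Projectivization.linearIndependent_pair_iff_ne.2 h)
  rw [Matrix.range_cons_cons_empty, Fintype.card_fin] at this
  exact this

theorem b_symm (B : V →ₗ[F] V →ₗ[F] F) (halt : ∀ v, B v v = 0)
    (v w : V) (h : B v w = 0) : B w v = 0 :=
  LinearMap.IsAlt.isRefl (B := B) halt v w h

theorem ti_pair (B : V →ₗ[F] V →ₗ[F] F) (halt : ∀ v, B v v = 0)
    (v w : V) (h : B v w = 0) :
    ∀ a ∈ Submodule.span F {v, w}, ∀ b ∈ Submodule.span F {v, w}, B a b = 0 := by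
  intro a ha b hb
  obtain ⟨a1, a2, rfl⟩ := Submodule.mem_span_pair.1 ha
  obtain ⟨b1, b2, rfl⟩ := Submodule.mem_span_pair.1 hb
  simp [halt, h, b_symm B halt v w h]

theorem perp_eq (B : V →ₗ[F] V →ₗ[F] F) (halt : ∀ v, B v v = 0)
    (O : Set (Projectivization F V))
    (hO : ∀ M : Submodule F V, finrank F M = 2 →
        (∀ v ∈ M, ∀ w ∈ M, B v w = 0) → ∃! x, x ∈ O ∧ x.rep ∈ M)
    (x y : Projectivization F V) (hx : x ∈ O) (hy : y ∈ O)
    (h : B x.rep y.rep = 0) : x = y := by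
  by_contra hne
  obtain ⟨z, -, hz⟩ := hO _ (finrank_pair x y hne) (ti_pair B halt _ _ h)
  refine hne ((hz x ⟨hx, ?_⟩).trans (hz y ⟨hy, ?_⟩).symm) <;>
  exact Submodule.subset_span (by simp)

theorem count_in (B : V →ₗ[F] V →ₗ[F] F) (halt : ∀ v, B v v = 0)
    (O : Set (Projectivization F V))
    (hO : ∀ M : Submodule F V, finrank F M = 2 →
        (∀ v ∈ M, ∀ w ∈ M, B v w = 0) → ∃! x, x ∈ O ∧ x.rep ∈ M)
    (p : Projectivization F V) (hp : p ∈ O) :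
    {x | x ∈ O ∧ B p.rep x.rep = 0}.ncard = 1 := by
  rw [Set.ncard_eq_one]
  refine ⟨p, ?_⟩
  ext x
  simp only [Set.mem_ofPred_eq, Set.mem_singleton_iff]
  constructor
  · rintro ⟨h1, h2⟩
    exact (perp_eq B halt O hO p x hp h1 h2).symm
  · rintro rfl
    exact ⟨hp, halt _⟩

theorem count_out (B : V →ₗ[F] V →ₗ[F] F) (halt : ∀ v, B v v = 0)
    (O : Set (Projectivization F V))
    (hO : ∀ M : Submodule F V, finrank F M = 2 →
        (∀ v ∈ M, ∀ w ∈ M, B v w = 0) → ∃! x, x ∈ O ∧ x.rep ∈ M)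
    [Finite F] [FiniteDimensional F V] (hV : finrank F V = 4)
    (hnd : ∀ v, (∀ w, B v w = 0) → v = 0)
    (p : Projectivization F V) (hp : p ∉ O) :
    {x | x ∈ O ∧ B p.rep x.rep = 0}.ncard = Nat.card F + 1 := by
  obtain ⟨C, hC⟩ := Submodule.exists_isCompl (Submodule.span F {p.rep})
  have hfr := Submodule.finrank_add_eq_of_isCompl hC
  rw [finrank_span_singleton p.rep_nonzero, hV] at hfr
  have hdec : ∀ v : V, ∃ a : F, ∃ c ∈ C, a • p.rep + c = v := by
    intro v
    have : v ∈ Submodule.span F {p.rep} ⊔ C := by rw [hC.sup_eq_top]; trivial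
    obtain ⟨y, hy, c, hc, rfl⟩ := Submodule.mem_sup.1 this
    obtain ⟨a, rfl⟩ := Submodule.mem_span_singleton.1 hy
    exact ⟨a, c, hc, rfl⟩
  have hpC : ∀ a : F, a • p.rep ∈ C → a = 0 := by
    intro a ha
    have := Submodule.disjoint_def.1 hC.disjoint (a • p.rep)
      (Submodule.smul_mem _ _ (Submodule.mem_span_singleton_self _)) ha
    exact (smul_eq_zero.1 this).resolve_right p.rep_nonzero
  set L := C ⊓ LinearMap.ker (B p.rep) with hL
  have hLr : finrank F L = 2 := by
    have := finrank_inf_ker (B p.rep) C (by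
      intro hle
      apply p.rep_nonzero
      apply hnd
      intro w
      obtain ⟨a, c, hc, rfl⟩ := hdec w
      have := hle hc
      simp only [LinearMap.mem_ker] at this
      simp [halt, this])
    rw [← hL] at this
    omega
  have hpL : ∀ r : Projectivization F V, r.rep ∈ L → p ≠ r := by
    rintro r hr rfl
    exact one_ne_zero (hpC 1 (by simpa using hr.1))
  have hex : ∀ r : Projectivization F V, r.rep ∈ L →
      ∃ x, x ∈ O ∧ x.rep ∈ Submodule.span F {p.rep, r.rep} := fun r hr =>
    (hO _ (finrank_pair p r (hpL r hr)) (ti_pair B halt _ _ hr.2)).exists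
  rw [← card_points_two L hLr]
  symm
  refine Set.ncard_congr (fun r hr => (hex r hr).choose) ?_ ?_ ?_
  · intro r hr
    obtain ⟨h1, h2⟩ := (hex r hr).choose_spec
    exact ⟨h1, ti_pair B halt p.rep r.rep hr.2 _ (Submodule.subset_span (by simp)) _ h2⟩
  · intro r s hr hs heq
    obtain ⟨h1, h2⟩ := (hex r hr).choose_spec
    obtain ⟨h3, h4⟩ := (hex s hs).choose_spec
    rw [← heq] at h4
    set x := (hex r hr).choose
    obtain ⟨a, b, hab⟩ := Submodule.mem_span_pair.1 h2
    obtain ⟨c, d, hcd⟩ := Submodule.mem_span_pair.1 h4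
    have hb : b ≠ 0 := by
      rintro rfl
      have := eq_of_smul x p a (by simpa using hab)
      exact hp (this ▸ h1)
    have e : (a - c) • p.rep = d • s.rep - b • r.rep := by
      rw [sub_smul, sub_eq_sub_iff_add_eq_add, hab, add_comm, hcd]
    have hac := hpC (a - c) (e ▸ C.sub_mem (C.smul_mem _ hs.1) (C.smul_mem _ hr.1))
    rw [hac, zero_smul, eq_comm, sub_eq_zero] at e
    apply eq_of_smul r s (b⁻¹ * d)
    rw [mul_smul, e, smul_smul, inv_mul_cancel₀ hb, one_smul]
  · rintro x ⟨hx, hpx⟩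
    obtain ⟨a, c, hc, hac⟩ := hdec x.rep
    have hc0 : c ≠ 0 := by
      rintro rfl
      have := eq_of_smul x p a (by simpa using hac)
      exact hp (this ▸ hx)
    have hcL : c ∈ L := by
      refine ⟨hc, ?_⟩
      rw [← hac] at hpx
      simpa [halt] using hpx
    have hr : (Projectivization.mk F c hc0).rep ∈ L := (mk_rep_mem _ _ _).2 hcL
    refine ⟨Projectivization.mk F c hc0, hr, ?_⟩
    obtain ⟨h1, h2⟩ := (hex _ hr).choose_spec
    refine (hO _ (finrank_pair p _ (hpL _ hr)) (ti_pair B halt _ _ hr.2)).unique ⟨h1, h2⟩ ⟨hx, ?_⟩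
    obtain ⟨u, hu⟩ := Projectivization.exists_smul_eq_mk_rep F c hc0
    rw [← hu, ← hac]
    refine Submodule.add_mem _ (Submodule.smul_mem _ _ (Submodule.subset_span (by simp))) ?_
    have : c = (u⁻¹ : Fˣ) • (u • c) := by simp
    rw [this]
    exact Submodule.smul_mem _ ((u⁻¹ : Fˣ) : F) (Submodule.subset_span (by simp))

/-- Count of points of a line `L` perpendicular to a point. -/
theorem count_line (B : V →ₗ[F] V →ₗ[F] F) (halt : ∀ v, B v v = 0)
    [Finite F] [FiniteDimensional F V] (L : Submodule F V) (hL : finrank F L = 2)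
    (o : Projectivization F V) [Decidable (∀ v ∈ L, B v o.rep = 0)] :
    {p : Projectivization F V | p.rep ∈ L ∧ B p.rep o.rep = 0}.ncard
      = 1 + if ∀ v ∈ L, B v o.rep = 0 then Nat.card F else 0 := by
  split_ifs with h
  · rw [add_comm, ← card_points_two L hL]
    congr 1
    ext p
    simp only [Set.mem_ofPred_eq, and_iff_left_iff_imp]
    exact h _
  · have := finrank_inf_ker (B o.rep) L (fun hle => h fun v hv => b_symm B halt _ _ (hle hv))
    rw [add_zero, ← card_points_one (L ⊓ LinearMap.ker (B o.rep)) (by omega)]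
    congr 1
    ext p
    simp only [Set.mem_ofPred_eq, Submodule.mem_inf, LinearMap.mem_ker]
    exact and_congr_right fun _ => ⟨b_symm B halt _ _, b_symm B halt _ _⟩

theorem double_count (B : V →ₗ[F] V →ₗ[F] F) (halt : ∀ v, B v v = 0)
    (O : Set (Projectivization F V))
    (hO : ∀ M : Submodule F V, finrank F M = 2 →
        (∀ v ∈ M, ∀ w ∈ M, B v w = 0) → ∃! x, x ∈ O ∧ x.rep ∈ M)
    [Finite F] [FiniteDimensional F V] (hV : finrank F V = 4)
    (hnd : ∀ v, (∀ w, B v w = 0) → v = 0)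
    (L : Submodule F V) (hL : finrank F L = 2) :
    O.ncard + Nat.card F * {o | o ∈ O ∧ ∀ v ∈ L, B v o.rep = 0}.ncard
      + Nat.card F * {o | o ∈ O ∧ o.rep ∈ L}.ncard = (Nat.card F + 1) * (Nat.card F + 1) := by
  classical
  have : Finite V := Module.finite_of_finite F
  have : Fintype (Projectivization F V) := Fintype.ofFinite _
  have key := sum_card_bipartiteAbove_eq_sum_card_bipartiteBelow
    (s := univ.filter fun p : Projectivization F V => p.rep ∈ L)
    (t := univ.filter fun o : Projectivization F V => o ∈ O)
    (fun p o => B p.rep o.rep = 0)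
  have hcard : ∀ P : Projectivization F V → Prop, ∀ [DecidablePred P],
      {x | P x}.ncard = (univ.filter P).card := by
    intro P _
    rw [← Set.ncard_coe_finset]; simp
  have h1 : ∀ p : Projectivization F V, (bipartiteAbove (fun p o => B p.rep o.rep = 0)
      (univ.filter fun o : Projectivization F V => o ∈ O) p).card
      + (if p ∈ O then Nat.card F else 0) = Nat.card F + 1 := by
    intro p
    rw [bipartiteAbove, filter_filter, ← hcard]
    split_ifs with hp
    · rw [count_in B halt O hO p hp, add_comm]
    · rw [count_out B halt O hO hV hnd p hp]
  have h2 : ∀ o : Projectivization F V, (bipartiteBelow (fun p o => B p.rep o.rep = 0)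
      (univ.filter fun p : Projectivization F V => p.rep ∈ L) o).card
      = 1 + if ∀ v ∈ L, B v o.rep = 0 then Nat.card F else 0 := by
    intro o
    rw [bipartiteBelow, filter_filter, ← hcard, count_line B halt L hL]
  simp only [h2] at key
  have h3 := sum_congr (s₁ := univ.filter fun p : Projectivization F V => p.rep ∈ L) rfl
    (fun p _ => h1 p)
  rw [sum_add_distrib, key, sum_add_distrib] at h3
  simp only [← sum_filter, filter_filter, sum_const, smul_eq_mul] at h3
  rw [← hcard, ← hcard, ← hcard, ← hcard, card_points_two L hL] at h3
  have e : {x | x.rep ∈ L ∧ x ∈ O} = {o | o ∈ O ∧ o.rep ∈ L} := by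
    ext; exact and_comm
  rw [e] at h3
  simp only [Set.ofPred_mem_eq] at h3
  linarith

theorem card_ovoid (B : V →ₗ[F] V →ₗ[F] F) (halt : ∀ v, B v v = 0)
    (O : Set (Projectivization F V))
    (hO : ∀ M : Submodule F V, finrank F M = 2 →
        (∀ v ∈ M, ∀ w ∈ M, B v w = 0) → ∃! x, x ∈ O ∧ x.rep ∈ M)
    [Finite F] [FiniteDimensional F V] (hV : finrank F V = 4)
    (hnd : ∀ v, (∀ w, B v w = 0) → v = 0) : O.ncard = Nat.card F * Nat.card F + 1 := by
  have : Nontrivial V := Module.nontrivial_of_finrank_pos (R := F) (by omega)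
  obtain ⟨v, hv⟩ := exists_ne (0 : V)
  have hk : 3 ≤ finrank F (LinearMap.ker (B v)) := by
    have := Module.Dual.finrank_ker_add_one_of_ne_zero (f := B v)
      (fun h => hv (hnd v fun w => by rw [h]; rfl))
    omega
  obtain ⟨w, hw, hwv⟩ : ∃ w ∈ LinearMap.ker (B v), w ∉ Submodule.span F {v} := by
    by_contra! hc
    have := Submodule.finrank_mono (R := F) (s := LinearMap.ker (B v)) hc
    rw [finrank_span_singleton hv] at this
    omega
  have hM : finrank F (Submodule.span F {v, w}) = 2 := by
    have hli : LinearIndependent F ![v, w] := by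
      rw [LinearIndependent.pair_iff' hv]
      intro a ha
      exact hwv (Submodule.mem_span_singleton.2 ⟨a, ha⟩)
    have := finrank_span_eq_card hli
    rw [Matrix.range_cons_cons_empty, Fintype.card_fin] at this
    exact this
  have hti := ti_pair B halt v w hw
  obtain ⟨x, ⟨hx, hxM⟩, hu⟩ := hO _ hM hti
  have := double_count B halt O hO hV hnd _ hM
  have e1 : {o | o ∈ O ∧ ∀ u ∈ Submodule.span F {v, w}, B u o.rep = 0} = {x} := by
    ext o
    simp only [Set.mem_ofPred_eq, Set.mem_singleton_iff]
    constructor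
    · rintro ⟨ho, h⟩
      exact (perp_eq B halt O hO x o hx ho (h _ hxM)).symm
    · rintro rfl
      exact ⟨hx, fun u hu => hti u hu _ hxM⟩
  have e2 : {o | o ∈ O ∧ o.rep ∈ Submodule.span F {v, w}} = {x} := by
    ext o
    simp only [Set.mem_ofPred_eq, Set.mem_singleton_iff]
    constructor
    · exact fun h => hu o h
    · rintro rfl
      exact ⟨hx, hxM⟩
  rw [e1, e2, Set.ncard_singleton] at this
  linarith

end OvoidAux


/-- An ovoid of the generalized quadrangle `W(q)` (a set of points of
`ℙ(F, F⁴)` containing exactly one point of every totally isotropic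
two-dimensional subspace, where `B` is a nondegenerate alternating bilinear
form on `F⁴` and `|F| = q`) is an ovoid of `PG(3, q)`: no three of its points
lie in a common two-dimensional subspace, and every three-dimensional
subspace (plane of `PG(3, q)`) contains either exactly `1` or exactly `q + 1`
of its points. -/
theorem ovoid_of_Wq_is_ovoid_of_PG3q
    {q : ℕ} (F : Type) [Field F] [Fintype F] (hF : Fintype.card F = q)
    (B : (Fin 4 → F) →ₗ[F] (Fin 4 → F) →ₗ[F] F)
    -- `B` is nondegenerate
    (hnd : ∀ v, (∀ w, B v w = 0) → v = 0)
    -- `B` is alternating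
    (halt : ∀ v, B v v = 0)
    (O : Set (Projectivization F (Fin 4 → F)))
    -- `O` contains exactly one point of each totally isotropic
    -- two-dimensional subspace of `V = F⁴`
    (hO : ∀ M : Submodule F (Fin 4 → F), Module.finrank F M = 2 →
        (∀ v ∈ M, ∀ w ∈ M, B v w = 0) →
        ∃! x, x ∈ O ∧ x.submodule ≤ M) :
    -- no three distinct points of `O` lie in a common 2-dimensional subspace
    (∀ x ∈ O, ∀ y ∈ O, ∀ z ∈ O, x ≠ y → x ≠ z → y ≠ z →
        ∀ M : Submodule F (Fin 4 → F), Module.finrank F M = 2 →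
          ¬ (x.submodule ≤ M ∧ y.submodule ≤ M ∧ z.submodule ≤ M)) ∧
    -- every 3-dimensional subspace contains exactly `1` or `q + 1` points of `O`
    (∀ M : Submodule F (Fin 4 → F), Module.finrank F M = 3 →
        {x | x ∈ O ∧ x.submodule ≤ M}.ncard = 1 ∨
        {x | x ∈ O ∧ x.submodule ≤ M}.ncard = q + 1) := by

  have hcF : Nat.card F = q := by rw [Nat.card_eq_fintype_card, hF]
  have hV : Module.finrank F (Fin 4 → F) = 4 := by simp
  simp only [sub_le_iff] at hO ⊢
  constructor
  · rintro x hx y hy z hz hxy hxz hyz M hM ⟨hxM, hyM, hzM⟩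
    have h1 := double_count B halt O hO hV hnd M hM
    have h2 := card_ovoid B halt O hO hV hnd
    have e1 : {o | o ∈ O ∧ ∀ u ∈ M, B u o.rep = 0} = ∅ := by
      rw [Set.eq_empty_iff_forall_notMem]
      rintro o ⟨ho, h⟩
      exact hxy ((perp_eq B halt O hO x o hx ho (h _ hxM)).trans
        (perp_eq B halt O hO y o hy ho (h _ hyM)).symm)
    rw [e1, Set.ncard_empty, h2] at h1
    have hpos : 0 < Nat.card F := Nat.card_pos
    have h3 : {o | o ∈ O ∧ o.rep ∈ M}.ncard = 2 := by
      apply Nat.eq_of_mul_eq_mul_left hpos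
      linarith
    have h4 : ({x, y, z} : Set (Projectivization F (Fin 4 → F))).ncard = 3 :=
      Set.ncard_eq_three.2 ⟨x, y, z, hxy, hxz, hyz, rfl⟩
    have h5 : ({x, y, z} : Set (Projectivization F (Fin 4 → F))) ⊆ {o | o ∈ O ∧ o.rep ∈ M} := by
      rintro o (rfl | rfl | rfl)
      · exact ⟨hx, hxM⟩
      · exact ⟨hy, hyM⟩
      · exact ⟨hz, hzM⟩
    have h6 := Set.ncard_le_ncard h5 (Set.toFinite _)
    omega
  · intro M hM
    have hlt : M < ⊤ := by
      rw [lt_top_iff_ne_top]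
      rintro rfl
      rw [finrank_top] at hM
      omega
    obtain ⟨f, hf0, hf⟩ := Submodule.exists_le_ker_of_lt_top M hlt
    have hinj : Function.Injective B := by
      rw [injective_iff_map_eq_zero]
      intro v hv
      exact hnd v fun w => by rw [hv]; rfl
    have hsurj : Function.Surjective B :=
      (LinearMap.injective_iff_surjective_of_finrank_eq_finrank
        (Subspace.dual_finrank_eq (K := F) (V := Fin 4 → F)).symm).1 hinj
    obtain ⟨v, rfl⟩ := hsurj f
    have hv : v ≠ 0 := by
      rintro rfl
      exact hf0 (map_zero B)
    have hker := Module.Dual.finrank_ker_add_one_of_ne_zero (f := B v) hf0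
    have hMk : M = LinearMap.ker (B v) := by
      apply Submodule.eq_of_le_of_finrank_eq hf
      omega
    obtain ⟨u, hu⟩ := Projectivization.exists_smul_eq_mk_rep F v hv
    have e : {x | x ∈ O ∧ x.rep ∈ M}
        = {x | x ∈ O ∧ B (Projectivization.mk F v hv).rep x.rep = 0} := by
      ext x
      rw [← hu, hMk]
      simp [Units.smul_def]
    rw [e, ← hcF]
    by_cases hp : Projectivization.mk F v hv ∈ O
    · exact Or.inl (count_in B halt O hO _ hp)
    · exact Or.inr (count_out B halt O hO hV hnd _ hp)
end

section
/- Let I be an inversive plane of even order q, let p be a pencil of I with carrier x, and let C be a circle of I such that x ∉ C and C ∉ p. Then there is a unique circle D ∈ p such that |C ∩ D| = 1 (i.e., D is tangent to C). -/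
/-- An inversive plane of order `q` on a finite point set `P`:
`|P| = q² + 1`, every circle has `q + 1` points, and any three distinct
points lie in exactly one circle. -/
structure InversivePlane (q : ℕ) (P : Type) [Fintype P] where
  two_le : 2 ≤ q
  circles : Finset (Finset P)
  card_points : Fintype.card P = q ^ 2 + 1
  circle_card : ∀ C ∈ circles, C.card = q + 1
  three_points : ∀ x y z : P, x ≠ y → x ≠ z → y ≠ z →
      ∃! C, C ∈ circles ∧ x ∈ C ∧ y ∈ C ∧ z ∈ C

/-- A pencil with carrier `x` in an inversive plane: a set of circles, each
containing `x`, any two distinct members of which meet exactly in `{x}`,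
such that every point other than `x` lies in exactly one of its circles. -/
def InversivePlane.IsPencil {q : ℕ} {P : Type} [Fintype P] [DecidableEq P]
    (I : InversivePlane q P) (x : P) (p : Finset (Finset P)) : Prop :=
  (∀ C ∈ p, C ∈ I.circles ∧ x ∈ C) ∧
  (∀ C ∈ p, ∀ D ∈ p, C ≠ D → C ∩ D = {x}) ∧
  (∀ y : P, y ≠ x → ∃! C, C ∈ p ∧ y ∈ C)

section Helpers
variable {q : ℕ} {P : Type} [Fintype P] [DecidableEq P]

theorem sum_inter_of_unique (F : Finset (Finset P)) (A : Finset P)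
    (h : ∀ a ∈ A, ∃! E, E ∈ F ∧ a ∈ E) : ∑ E ∈ F, (A ∩ E).card = A.card := by
  have := Finset.sum_card_inter (s := A) (B := F) (n := 1) (by
    intro a ha
    obtain ⟨E, hE, hu⟩ := h a ha
    rw [Finset.card_eq_one]
    refine ⟨E, ?_⟩
    ext G
    simp only [Finset.mem_filter, Finset.mem_singleton]
    constructor
    · intro hG
      exact hu G hG
    · rintro rfl
      exact hE)
  simpa using this

theorem circle_eq (I : InversivePlane q P) {C D : Finset P} (hC : C ∈ I.circles)
    (hD : D ∈ I.circles) {a b c : P} (hab : a ≠ b) (hac : a ≠ c) (hbc : b ≠ c)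
    (h1 : a ∈ C) (h2 : b ∈ C) (h3 : c ∈ C) (h4 : a ∈ D) (h5 : b ∈ D) (h6 : c ∈ D) : C = D :=
  (I.three_points a b c hab hac hbc).unique ⟨hC, h1, h2, h3⟩ ⟨hD, h4, h5, h6⟩

theorem inter_le_two (I : InversivePlane q P) {C D : Finset P} (hC : C ∈ I.circles)
    (hD : D ∈ I.circles) (hne : C ≠ D) : (C ∩ D).card ≤ 2 := by
  by_contra h
  obtain ⟨a, b, c, ha, hb, hc, hab, hac, hbc⟩ := Finset.two_lt_card_iff.mp (not_le.mp h)
  simp only [Finset.mem_inter] at ha hb hc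
  exact hne (circle_eq I hC hD hab hac hbc ha.1 hb.1 hc.1 ha.2 hb.2 hc.2)

theorem exists_odd_tangent (I : InversivePlane q P) (hq : Even q) {C : Finset P}
    (hC : C ∈ I.circles) {x : P} (hxC : x ∉ C) (F : Finset (Finset P))
    (hF : ∀ E ∈ F, E ∈ I.circles ∧ x ∈ E)
    (h : ∀ a ∈ C, ∃! E, E ∈ F ∧ a ∈ E) : ∃ E ∈ F, (C ∩ E).card = 1 := by
  by_contra! hcon
  have hs := sum_inter_of_unique F C h
  have he : Even (∑ E ∈ F, (C ∩ E).card) := by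
    apply Finset.even_sum
    intro E hE
    have h2 := inter_le_two I hC (hF E hE).1 (by rintro rfl; exact hxC (hF _ hE).2)
    have h1 := hcon E hE
    have : (C ∩ E).card = 0 ∨ (C ∩ E).card = 2 := by omega
    rcases this with h | h <;> rw [h] <;> decide
  rw [hs, I.circle_card C hC] at he
  exact (Nat.even_add_one.mp he) hq

theorem tangent_at (I : InversivePlane q P) {C : Finset P}
    (hC : C ∈ I.circles) {x : P} (hxC : x ∉ C) {y : P} (hy : y ∈ C) :
    ∃! E, E ∈ I.circles ∧ x ∈ E ∧ C ∩ E = {y} := by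
  have hxy : x ≠ y := by rintro rfl; exact hxC hy
  have h2 := I.two_le
  set F := I.circles.filter (fun E => x ∈ E ∧ y ∈ E) with hFdef
  have hu : ∀ a, a ≠ x → a ≠ y → ∃! E, E ∈ F ∧ a ∈ E := by
    intro a hax hay
    obtain ⟨E, hE, hu⟩ := I.three_points x y a hxy hax.symm hay.symm
    refine ⟨E, ⟨by simp [hFdef, hE.1, hE.2.1, hE.2.2.1], hE.2.2.2⟩, ?_⟩
    rintro G ⟨hG, haG⟩
    simp only [hFdef, Finset.mem_filter] at hG
    exact hu G ⟨hG.1, hG.2.1, hG.2.2, haG⟩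
  have hs1 := sum_inter_of_unique F (Finset.univ \ {x, y}) (by
    intro a ha
    simp at ha
    exact hu a (by tauto) (by tauto))
  have hs2 := sum_inter_of_unique F (C \ {y}) (by
    intro a ha
    simp at ha
    exact hu a (by rintro rfl; exact hxC ha.1) ha.2)
  have hcard : F.card = q + 1 := by
    have e1 : ∀ E ∈ F, ((Finset.univ \ {x, y}) ∩ E).card = q - 1 := by
      intro E hE
      simp only [hFdef, Finset.mem_filter] at hE
      have : (Finset.univ \ {x, y}) ∩ E = E \ {x, y} := by ext; simp; tauto
      rw [this, Finset.card_sdiff_of_subset, I.circle_card E hE.1, Finset.card_pair hxy]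
      · omega
      · intro a; simp; rintro (rfl | rfl) <;> tauto
    rw [Finset.sum_congr rfl e1, Finset.card_sdiff_of_subset (Finset.subset_univ _),
      Finset.card_pair hxy, Finset.card_univ, I.card_points] at hs1
    simp only [Finset.sum_const, smul_eq_mul] at hs1
    obtain ⟨k, rfl⟩ : ∃ k, q = k + 1 := ⟨q - 1, by omega⟩
    have e3 : (k + 1) ^ 2 + 1 - 2 = (k + 1 + 1) * k := by
      have : (k + 1) ^ 2 + 1 = (k + 1 + 1) * k + 2 := by ring
      omega
    rw [e3, Nat.add_sub_cancel] at hs1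
    exact Nat.eq_of_mul_eq_mul_right (by omega) hs1
  have hle : ∀ E ∈ F, ((C \ {y}) ∩ E).card ≤ 1 := by
    intro E hE
    simp only [hFdef, Finset.mem_filter] at hE
    have h3 := inter_le_two I hC hE.1 (by rintro rfl; exact hxC hE.2.1)
    have : (C \ {y}) ∩ E = (C ∩ E).erase y := by ext; simp; tauto
    rw [this, Finset.card_erase_of_mem (by simp [hy, hE.2.2])]
    omega
  have hs3 : ∑ E ∈ F, ((C \ {y}) ∩ E).card
      = (F.filter (fun E => ¬ C ∩ E = {y})).card := by
    rw [Finset.card_filter]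
    apply Finset.sum_congr rfl
    intro E hE
    have h1 := hle E hE
    simp only [hFdef, Finset.mem_filter] at hE
    have : (C \ {y}) ∩ E = (C ∩ E).erase y := by ext; simp; tauto
    have hyE : y ∈ C ∩ E := by simp [hy, hE.2.2]
    by_cases h : C ∩ E = {y}
    · rw [this, h]; simp
    · rw [if_pos h]
      have : ((C \ {y}) ∩ E).card ≠ 0 := by
        intro h0
        rw [this, Finset.card_eq_zero, Finset.erase_eq_empty_iff] at h0
        rcases h0 with h0 | h0
        · simp [h0] at hyE
        · exact h h0
      omega
  have hs4 := Finset.card_filter_add_card_filter_not (s := F) (fun E => C ∩ E = {y})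
  have hs5 : (C \ {y}).card = q := by
    rw [Finset.card_sdiff_of_subset (by simpa using hy), I.circle_card C hC]; simp
  have h1 : (F.filter (fun E => C ∩ E = {y})).card = 1 := by omega
  obtain ⟨E, hE⟩ := Finset.card_eq_one.mp h1
  have key : ∀ G, (G ∈ I.circles ∧ x ∈ G ∧ C ∩ G = {y}) ↔ G = E := by
    intro G
    rw [show G = E ↔ G ∈ ({E} : Finset (Finset P)) from Finset.mem_singleton.symm, ← hE]
    simp only [hFdef, Finset.mem_filter]
    constructor
    · rintro ⟨a, b, c⟩
      have : y ∈ C ∩ G := by simp [c]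
      exact ⟨⟨a, b, (Finset.mem_inter.mp this).2⟩, c⟩
    · tauto
  exact ⟨E, (key E).2 rfl, fun G hG => (key G).1 hG⟩

theorem tangent_through (I : InversivePlane q P) (hq : Even q) {C : Finset P}
    (hC : C ∈ I.circles) {x : P} (hxC : x ∉ C) {z : P} (hz : z ≠ x) :
    ∃ E, E ∈ I.circles ∧ x ∈ E ∧ z ∈ E ∧ (C ∩ E).card = 1 := by
  by_cases hzC : z ∈ C
  · obtain ⟨E, ⟨h1, h2, h3⟩, -⟩ := tangent_at I hC hxC hzC
    have : z ∈ C ∩ E := by simp [h3]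
    exact ⟨E, h1, h2, (Finset.mem_inter.mp this).2, by simp [h3]⟩
  · obtain ⟨E, hE, h1⟩ := exists_odd_tangent I hq hC hxC
      (I.circles.filter (fun E => x ∈ E ∧ z ∈ E))
      (by intro E hE; simp only [Finset.mem_filter] at hE; tauto)
      (by
        intro a ha
        obtain ⟨E, hE, hu⟩ := I.three_points x z a hz.symm
          (by rintro rfl; exact hxC ha) (by rintro rfl; exact hzC ha)
        refine ⟨E, by simp only [Finset.mem_filter]; tauto, ?_⟩
        intro G hG
        simp only [Finset.mem_filter] at hG
        exact hu G (by tauto))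
    simp only [Finset.mem_filter] at hE
    exact ⟨E, hE.1, hE.2.1, hE.2.2, h1⟩

theorem pencil_card (I : InversivePlane q P) {x : P} {p : Finset (Finset P)}
    (hp : I.IsPencil x p) : p.card = q := by
  have h2 := I.two_le
  have hs := sum_inter_of_unique p (Finset.univ.erase x) (by
    intro a ha
    exact hp.2.2 a (by simpa using ha))
  have e1 : ∀ E ∈ p, ((Finset.univ.erase x) ∩ E).card = q := by
    intro E hE
    have : (Finset.univ.erase x) ∩ E = E.erase x := by ext; simp
    rw [this, Finset.card_erase_of_mem (hp.1 E hE).2, I.circle_card E (hp.1 E hE).1]; simp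
  rw [Finset.sum_congr rfl e1, Finset.card_erase_of_mem (Finset.mem_univ _),
    Finset.card_univ, I.card_points] at hs
  simp only [Finset.sum_const, smul_eq_mul, Nat.add_sub_cancel, pow_two] at hs
  exact Nat.eq_of_mul_eq_mul_right (by omega) hs

end Helpers

/-- In an inversive plane of even order `q`, if `p` is a pencil with carrier
`x` and `C` is a circle with `x ∉ C` and `C ∉ p`, then exactly one circle of
`p` is tangent to `C`. -/
theorem exists_unique_tangent_circle_in_pencil
    {q : ℕ} {P : Type} [Fintype P] [DecidableEq P]
    (hq : Even q) (I : InversivePlane q P)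
    (x : P) (p : Finset (Finset P)) (hp : I.IsPencil x p)
    (C : Finset P) (hC : C ∈ I.circles) (hxC : x ∉ C) (hCp : C ∉ p) :
    ∃! D, D ∈ p ∧ (C ∩ D).card = 1 := by
  have hCne : ∀ a ∈ C, a ≠ x := by rintro a ha rfl; exact hxC ha
  obtain ⟨D, hD, hD1⟩ := exists_odd_tangent I hq hC hxC p hp.1
    (fun a ha => hp.2.2 a (hCne a ha))
  refine ⟨D, ⟨hD, hD1⟩, ?_⟩
  rintro D' ⟨hD', hD'1⟩
  by_contra hne
  -- a circle of the pencil that is not tangent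
  obtain ⟨L, hL, hL1⟩ : ∃ L ∈ p, (C ∩ L).card ≠ 1 := by
    by_contra! hcon
    have hs := sum_inter_of_unique p C (fun a ha => hp.2.2 a (hCne a ha))
    rw [Finset.sum_congr rfl hcon, I.circle_card C hC] at hs
    simp [pencil_card I hp] at hs
  set S := I.circles.filter (fun E => x ∈ E ∧ (C ∩ E).card = 1) with hS
  have hScard : S.card ≤ q + 1 := by
    rw [← I.circle_card C hC]
    have hch : ∀ E, E ∈ S → ∃ y, C ∩ E = {y} := by
      intro E hE
      simp only [hS, Finset.mem_filter] at hE
      exact Finset.card_eq_one.mp hE.2.2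
    have : ∀ E, ∃ y, E ∈ S → C ∩ E = {y} := by
      intro E
      by_cases h : E ∈ S
      · obtain ⟨y, hy⟩ := hch E h
        exact ⟨y, fun _ => hy⟩
      · exact ⟨x, fun h' => absurd h' h⟩
    choose f hf using this
    have hfC : ∀ E ∈ S, f E ∈ C := by
      intro E hE
      have : f E ∈ C ∩ E := by simp [hf E hE]
      exact (Finset.mem_inter.mp this).1
    apply Finset.card_le_card_of_injOn f hfC
    intro E hE G hG hEG
    have hE' : E ∈ S := hE
    have hG' : G ∈ S := hG
    have h1 := hf E hE'
    have h2 := hf G hG'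
    rw [← hEG] at h2
    have h3 := hfC E hE'
    simp only [hS, Finset.mem_filter] at hE' hG'
    exact (tangent_at I hC hxC h3).unique ⟨hE'.1, hE'.2.1, h1⟩ ⟨hG'.1, hG'.2.1, h2⟩
  have hLc := hp.1 L hL
  have hT : ∀ z, ∃ E, z ≠ x → E ∈ I.circles ∧ x ∈ E ∧ z ∈ E ∧ (C ∩ E).card = 1 := by
    intro z
    by_cases hz : z = x
    · exact ⟨C, fun h => absurd hz h⟩
    · obtain ⟨E, hE⟩ := tangent_through I hq hC hxC hz
      exact ⟨E, fun _ => hE⟩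
  choose T hT using hT
  have hle : (L.erase x).card ≤ (S \ {D, D'}).card := by
    apply Finset.card_le_card_of_injOn T
    · intro z hz
      have hz' : z ≠ x ∧ z ∈ L := Finset.mem_erase.mp hz
      obtain ⟨h1, h2, h3, h4⟩ := hT z hz'.1
      have hTp : T z ∉ p := by
        intro h
        have : T z = L := (hp.2.2 z hz'.1).unique ⟨h, h3⟩ ⟨hL, hz'.2⟩
        rw [this] at h4
        exact hL1 h4
      have : T z ∈ S \ {D, D'} := by
        simp only [hS, Finset.mem_sdiff, Finset.mem_filter, Finset.mem_insert,
          Finset.mem_singleton]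
        refine ⟨⟨h1, h2, h4⟩, ?_⟩
        rintro (h | h) <;> rw [h] at hTp <;> contradiction
      exact this
    · intro z hz w hw hzw
      have hz' : z ≠ x ∧ z ∈ L := Finset.mem_erase.mp hz
      have hw' : w ≠ x ∧ w ∈ L := Finset.mem_erase.mp hw
      obtain ⟨h1, h2, h3, h4⟩ := hT z hz'.1
      obtain ⟨-, -, h5, -⟩ := hT w hw'.1
      rw [← hzw] at h5
      by_contra hzw'
      have := circle_eq I h1 hLc.1 hz'.1.symm hw'.1.symm hzw' h2 h3 h5 hLc.2 hz'.2 hw'.2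
      rw [this] at h4
      exact hL1 h4
  have hsub : {D, D'} ⊆ S := by
    intro E hE
    simp only [Finset.mem_insert, Finset.mem_singleton] at hE
    simp only [hS, Finset.mem_filter]
    rcases hE with rfl | rfl
    · exact ⟨(hp.1 _ hD).1, (hp.1 _ hD).2, hD1⟩
    · exact ⟨(hp.1 _ hD').1, (hp.1 _ hD').2, hD'1⟩
  rw [Finset.card_sdiff_of_subset hsub, Finset.card_pair (Ne.symm hne),
    Finset.card_erase_of_mem hLc.2, I.circle_card L hLc.1] at hle
  have := I.two_le
  omega
end

section
/- Let I be an inversive plane of even order q and let x, y be two distinct points of I. Let 𝓒_e be the family of circles C of I such that every circle containing both x and y meets C in exactly one point. Then |𝓒_e| = q − 1, and the circles in 𝓒_e are pairwise disjoint sets whose union is P \ {x,y} (they partition the complement of {x,y} in the point set). -/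
namespace InvPl

open Finset

variable {q : ℕ} {P : Type} [Fintype P] [DecidableEq P]

/-- Double counting of flags. -/
lemma flags (F : Finset (Finset P)) (S : Finset P) :
    ∑ D ∈ F, (D ∩ S).card = ∑ p ∈ S, (F.filter (fun D => p ∈ D)).card := by
  have h := Finset.sum_card_bipartiteAbove_eq_sum_card_bipartiteBelow
    (s := F) (t := S) (fun D p => p ∈ D)
  refine Eq.trans (Finset.sum_congr rfl fun D _ => ?_) h
  congr 1
  ext p
  simp [Finset.bipartiteAbove, and_comm]

/-- The circles through two points. -/
def B (I : InversivePlane q P) (x y : P) : Finset (Finset P) :=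
  I.circles.filter (fun D => x ∈ D ∧ y ∈ D)

lemma mem_B {I : InversivePlane q P} {x y : P} {D : Finset P} :
    D ∈ B I x y ↔ D ∈ I.circles ∧ x ∈ D ∧ y ∈ D := by simp [B]

lemma uniq (I : InversivePlane q P) {x y z : P} (h1 : x ≠ y) (h2 : x ≠ z) (h3 : y ≠ z)
    {C D : Finset P} (hC : C ∈ I.circles) (hD : D ∈ I.circles)
    (a1 : x ∈ C) (a2 : y ∈ C) (a3 : z ∈ C) (b1 : x ∈ D) (b2 : y ∈ D) (b3 : z ∈ D) : C = D :=
  (I.three_points x y z h1 h2 h3).unique ⟨hC, a1, a2, a3⟩ ⟨hD, b1, b2, b3⟩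

lemma exB (I : InversivePlane q P) {x y z : P} (h1 : x ≠ y) (h2 : x ≠ z) (h3 : y ≠ z) :
    ∃ D ∈ B I x y, z ∈ D := by
  obtain ⟨C, ⟨hC, a, b, c⟩, _⟩ := I.three_points x y z h1 h2 h3
  exact ⟨C, mem_B.2 ⟨hC, a, b⟩, c⟩

lemma inter_le (I : InversivePlane q P) {C D : Finset P} (hC : C ∈ I.circles)
    (hD : D ∈ I.circles) (h : C ≠ D) : (C ∩ D).card ≤ 2 := by
  by_contra hcon
  push Not at hcon
  obtain ⟨a, ha, b, hb, c, hc, hab, hac, hbc⟩ := Finset.two_lt_card.1 hcon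
  rw [Finset.mem_inter] at ha hb hc
  exact h (uniq I hab hac hbc hC hD ha.1 hb.1 hc.1 ha.2 hb.2 hc.2)

lemma card_B (I : InversivePlane q P) {x y : P} (h : x ≠ y) : (B I x y).card = q + 1 := by
  have hf := flags (B I x y) (univ \ {x, y})
  have h1 : ∀ D ∈ B I x y, (D ∩ (univ \ {x, y})).card = q - 1 := by
    intro D hD
    rw [mem_B] at hD
    have : D ∩ (univ \ {x, y}) = D \ {x, y} := by ext; simp
    rw [this, Finset.card_sdiff_of_subset (by
      intro p hp; simp at hp; rcases hp with rfl | rfl; exacts [hD.2.1, hD.2.2]),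
      I.circle_card D hD.1, Finset.card_pair h]
    omega
  have h2 : ∀ p ∈ (univ \ {x, y} : Finset P), ((B I x y).filter (fun D => p ∈ D)).card = 1 := by
    intro p hp
    simp at hp
    obtain ⟨D, hD, hpD⟩ := exB I h (Ne.symm hp.1) (Ne.symm hp.2)
    rw [Finset.card_eq_one]
    refine ⟨D, ?_⟩
    ext D'
    simp only [mem_filter, mem_singleton]
    constructor
    · rintro ⟨h', hp'⟩
      rw [mem_B] at h' hD
      exact uniq I h (Ne.symm hp.1) (Ne.symm hp.2) h'.1 hD.1 h'.2.1 h'.2.2 hp' hD.2.1 hD.2.2 hpD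
    · rintro rfl
      exact ⟨hD, hpD⟩
  rw [Finset.sum_congr rfl h1, Finset.sum_congr rfl h2] at hf
  simp only [sum_const, smul_eq_mul, mul_one] at hf
  rw [Finset.card_sdiff_of_subset (subset_univ _), Finset.card_univ, I.card_points,
    Finset.card_pair h] at hf
  have hq := I.two_le
  obtain ⟨k, rfl⟩ : ∃ k, q = k + 2 := ⟨q - 2, by omega⟩
  have e : (k + 2) ^ 2 + 1 - 2 = (k + 2 + 1) * (k + 2 - 1) := by
    have : k + 2 - 1 = k + 1 := by omega
    rw [this]
    have : (k + 2) ^ 2 + 1 = (k + 2 + 1) * (k + 1) + 2 := by ring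
    omega
  rw [e] at hf
  exact Nat.eq_of_mul_eq_mul_right (by omega) hf

/-- There is exactly one circle through `p` tangent to `D` at `z`. -/
lemma tan_ex (I : InversivePlane q P) {z p : P} {D : Finset P} (hD : D ∈ I.circles)
    (hz : z ∈ D) (hp : p ∉ D) : ∃! T, T ∈ B I z p ∧ T ∩ D = {z} := by
  have hzp : z ≠ p := by rintro rfl; exact hp hz
  have h1 : ∀ d ∈ D.erase z, ∃ T, T ∈ B I z p ∧ d ∈ T := by
    intro d hd
    rw [mem_erase] at hd
    obtain ⟨T, hT, h⟩ := exB I hzp (Ne.symm hd.1) (by rintro rfl; exact hp hd.2)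
    exact ⟨T, hT, h⟩
  choose! g hg using h1
  have hinj : Set.InjOn g (D.erase z) := by
    intro a ha b hb hab
    have ha' := hg a ha
    have hb' := hg b hb
    simp only [coe_erase, Set.mem_sdiff, mem_coe, Set.mem_singleton_iff] at ha hb
    by_contra hne
    rw [← hab] at hb'
    have hB := mem_B.1 ha'.1
    have := uniq I (Ne.symm ha.2) (Ne.symm hb.2) hne hB.1 hD hB.2.1 ha'.2 hb'.2 hz ha.1 hb.1
    rw [this] at hB
    exact hp hB.2.2
  have hsub : (D.erase z).image g ⊆ B I z p := by
    intro T hT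
    obtain ⟨d, hd, rfl⟩ := mem_image.1 hT
    exact (hg d hd).1
  have hc : (B I z p \ (D.erase z).image g).card = 1 := by
    rw [card_sdiff_of_subset hsub, card_image_of_injOn hinj, card_B I hzp, card_erase_of_mem hz,
      I.circle_card D hD]
    omega
  have hiff : ∀ T, T ∈ B I z p \ (D.erase z).image g ↔ T ∈ B I z p ∧ T ∩ D = {z} := by
    intro T
    rw [mem_sdiff]
    refine and_congr_right fun hT => ?_
    have hT' := mem_B.1 hT
    constructor
    · intro h
      ext d
      simp only [mem_inter, mem_singleton]
      constructor
      · rintro ⟨h1, h2⟩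
        by_contra hne
        apply h
        have hd : d ∈ D.erase z := mem_erase.2 ⟨hne, h2⟩
        refine mem_image.2 ⟨d, hd, ?_⟩
        have hB := mem_B.1 (hg d hd).1
        exact uniq I hzp (Ne.symm hne) (by rintro rfl; exact hp h2) hB.1 hT'.1
          hB.2.1 hB.2.2 (hg d hd).2 hT'.2.1 hT'.2.2 h1
      · rintro rfl; exact ⟨hT'.2.1, hz⟩
    · intro h h2
      obtain ⟨d, hd, rfl⟩ := mem_image.1 h2
      have : d ∈ g d ∩ D := mem_inter.2 ⟨(hg d hd).2, (mem_erase.1 hd).2⟩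
      rw [h, mem_singleton] at this
      exact (mem_erase.1 hd).1 this
  obtain ⟨T, hT⟩ := card_eq_one.1 hc
  refine ⟨T, (hiff T).1 (by rw [hT]; simp), fun T' h' => ?_⟩
  have := (hiff T').2 h'
  rwa [hT, mem_singleton] at this

/-- Parallelism of circles at `z`. -/
def Par (z : P) (C D : Finset P) : Prop := C = D ∨ C ∩ D = {z}

lemma Par.symm {z : P} {C D : Finset P} (h : Par z C D) : Par z D C := by
  rcases h with h | h
  · exact Or.inl h.symm
  · exact Or.inr (by rw [inter_comm]; exact h)

lemma par_trans (I : InversivePlane q P) {z : P} {C D E : Finset P}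
    (hC : C ∈ I.circles) (hD : D ∈ I.circles) (hE : E ∈ I.circles)
    (zC : z ∈ C) (zD : z ∈ D) (zE : z ∈ E) (h1 : Par z C D) (h2 : Par z D E) : Par z C E := by
  rcases h1 with rfl | h1
  · exact h2
  rcases h2 with rfl | h2
  · exact Or.inr h1
  by_cases h : ∃ p, p ≠ z ∧ p ∈ C ∧ p ∈ E
  · obtain ⟨p, hp, pC, pE⟩ := h
    left
    have hpD : p ∉ D := by
      intro hpD
      have : p ∈ C ∩ D := mem_inter.2 ⟨pC, hpD⟩
      rw [h1, mem_singleton] at this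
      exact hp this
    exact (tan_ex I hD zD hpD).unique ⟨mem_B.2 ⟨hC, zC, pC⟩, h1⟩
      ⟨mem_B.2 ⟨hE, zE, pE⟩, by rw [inter_comm]; exact h2⟩
  · right
    push Not at h
    ext p
    simp only [mem_inter, mem_singleton]
    constructor
    · rintro ⟨a, b⟩
      by_contra hne
      exact h p hne a b
    · rintro rfl; exact ⟨zC, zE⟩

lemma par_eq {z p : P} {C D : Finset P} (h : Par z C D) (hp : p ≠ z) (pC : p ∈ C) (pD : p ∈ D) :
    C = D := by
  rcases h with h | h
  · exact h
  · have : p ∈ C ∩ D := mem_inter.2 ⟨pC, pD⟩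
    rw [h, mem_singleton] at this
    exact absurd this hp

lemma odd_tan (I : InversivePlane q P) (hq : Even q) {z : P} {E : Finset P} (hE : E ∈ I.circles)
    (hz : z ∉ E) (F : Finset (Finset P)) (hF : ∀ T ∈ F, T ∈ I.circles ∧ z ∈ T)
    (hu : ∀ e ∈ E, ∃! T, T ∈ F ∧ e ∈ T) : ∃ T ∈ F, (T ∩ E).card = 1 := by
  have hf := flags F E
  have h2 : ∀ p ∈ E, (F.filter (fun D => p ∈ D)).card = 1 := by
    intro p hp
    obtain ⟨T, hT, hT'⟩ := hu p hp
    refine card_eq_one.2 ⟨T, ?_⟩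
    ext D
    simp only [mem_filter, mem_singleton]
    exact ⟨fun h => hT' D h, by rintro rfl; exact hT⟩
  rw [Finset.sum_congr rfl h2] at hf
  simp only [sum_const, smul_eq_mul, mul_one, I.circle_card E hE] at hf
  by_contra hcon
  push Not at hcon
  have hev : Even (∑ D ∈ F, (D ∩ E).card) := by
    apply Finset.even_sum
    intro T hT
    have h1 := hcon T hT
    have h3 := inter_le I (hF T hT).1 hE (by rintro rfl; exact hz (hF T hT).2)
    interval_cases h : (T ∩ E).card
    · simp
    · exact absurd rfl h1
    · simp
  rw [hf] at hev
  rw [Nat.even_add_one] at hev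
  exact hev hq

lemma tan_par (I : InversivePlane q P) (hq : Even q) {z : P} {D E : Finset P}
    (hE : E ∈ I.circles) (hD : D ∈ I.circles) (hz : z ∉ E) (zD : z ∈ D) :
    ∃ T ∈ I.circles, z ∈ T ∧ Par z T D ∧ (T ∩ E).card = 1 := by
  classical
  obtain ⟨T, hT, h⟩ := odd_tan I hq hE hz (I.circles.filter (fun T => z ∈ T ∧ Par z T D))
    (fun T hT => by simp at hT; exact ⟨hT.1, hT.2.1⟩) (by
      intro e he
      have hez : e ≠ z := by rintro rfl; exact hz he
      simp only [mem_filter]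
      by_cases heD : e ∈ D
      · refine ⟨D, ⟨⟨hD, zD, Or.inl rfl⟩, heD⟩, ?_⟩
        rintro T ⟨⟨h1, h2, h3⟩, h4⟩
        exact par_eq h3 hez h4 heD
      · obtain ⟨T, hT, hT'⟩ := tan_ex I hD zD heD
        rw [mem_B] at hT
        refine ⟨T, ⟨⟨hT.1.1, hT.1.2.1, Or.inr hT.2⟩, hT.1.2.2⟩, ?_⟩
        rintro T' ⟨⟨h1, h2, h3⟩, h4⟩
        refine hT' T' ⟨mem_B.2 ⟨h1, h2, h4⟩, ?_⟩
        rcases h3 with rfl | h3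
        · exact absurd h4 heD
        · exact h3)
  simp at hT
  exact ⟨T, hT.1, hT.2.1, hT.2.2, h⟩

lemma tan_pt (I : InversivePlane q P) (hq : Even q) {z p : P} {E : Finset P}
    (hE : E ∈ I.circles) (hz : z ∉ E) (hp : p ≠ z) :
    ∃ T ∈ I.circles, z ∈ T ∧ p ∈ T ∧ (T ∩ E).card = 1 := by
  by_cases hpE : p ∈ E
  · obtain ⟨T, hT, -⟩ := tan_ex I hE hpE hz
    rw [mem_B] at hT
    exact ⟨T, hT.1.1, hT.1.2.2, hT.1.2.1, by rw [hT.2]; simp⟩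
  · obtain ⟨T, hT, h⟩ := odd_tan I hq hE hz (B I z p)
      (fun T hT => ⟨(mem_B.1 hT).1, (mem_B.1 hT).2.1⟩) (by
        intro e he
        have h1 : z ≠ e := by rintro rfl; exact hz he
        have h2 : p ≠ e := by rintro rfl; exact hpE he
        obtain ⟨T, hT, heT⟩ := exB I (Ne.symm hp) h1 h2
        refine ⟨T, ⟨hT, heT⟩, ?_⟩
        rintro T' ⟨hT', h'⟩
        rw [mem_B] at hT hT'
        exact uniq I (Ne.symm hp) h1 h2 hT'.1 hT.1 hT'.2.1 hT'.2.2 h' hT.2.1 hT.2.2 heT)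
    rw [mem_B] at hT
    exact ⟨T, hT.1, hT.2.1, hT.2.2, h⟩

lemma tan_uniq (I : InversivePlane q P) {z e : P} {E T T' : Finset P}
    (hE : E ∈ I.circles) (hz : z ∉ E) (hT : T ∈ I.circles) (hT' : T' ∈ I.circles)
    (zT : z ∈ T) (zT' : z ∈ T') (h : T ∩ E = {e}) (h' : T' ∩ E = {e}) : T = T' := by
  have a : e ∈ T ∩ E := by rw [h]; simp
  have b : e ∈ T' ∩ E := by rw [h']; simp
  rw [mem_inter] at a b
  exact (tan_ex I hE a.2 hz).unique ⟨mem_B.2 ⟨hT, a.1, zT⟩, h⟩ ⟨mem_B.2 ⟨hT', b.1, zT'⟩, h'⟩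

/-- Two tangents to `E` through `z` are not tangent to each other at `z`. -/
lemma no_par (I : InversivePlane q P) (hq : Even q) {z : P} {E C1 C2 : Finset P}
    (hE : E ∈ I.circles) (hz : z ∉ E) (h1 : C1 ∈ I.circles) (h2 : C2 ∈ I.circles)
    (z1 : z ∈ C1) (z2 : z ∈ C2) (t1 : (C1 ∩ E).card = 1) (t2 : (C2 ∩ E).card = 1)
    (hp : C1 ∩ C2 = {z}) : False := by
  obtain ⟨e1, he1⟩ := card_eq_one.1 t1
  obtain ⟨e2, he2⟩ := card_eq_one.1 t2
  have m1 : e1 ∈ C1 ∧ e1 ∈ E := by rw [← mem_inter, he1]; simp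
  have m2 : e2 ∈ C2 ∧ e2 ∈ E := by rw [← mem_inter, he2]; simp
  have e1z : e1 ≠ z := by rintro rfl; exact hz m1.2
  have e12 : e1 ≠ e2 := by
    rintro rfl
    have : e1 ∈ C1 ∩ C2 := mem_inter.2 ⟨m1.1, m2.1⟩
    rw [hp, mem_singleton] at this
    exact e1z this
  have hex : ∀ D ∈ (B I e1 z).erase C1, ∃ e, e ∈ E ∧ ∃ T ∈ I.circles, z ∈ T ∧ Par z T D ∧
      T ∩ E = {e} := by
    intro D hD
    rw [mem_erase, mem_B] at hD
    obtain ⟨T, a, b, c, d⟩ := tan_par I hq hE hD.2.1 hz hD.2.2.2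
    obtain ⟨e, he⟩ := card_eq_one.1 d
    have : e ∈ T ∩ E := by rw [he]; simp
    exact ⟨e, (mem_inter.1 this).2, T, a, b, c, he⟩
  haveI : Nonempty P := ⟨z⟩
  choose! g hgE hg using hex
  have hmaps : ∀ D ∈ (B I e1 z).erase C1, g D ∈ (E.erase e1).erase e2 := by
    intro D hD
    obtain ⟨T, a, b, c, d⟩ := hg D hD
    have hgD := hgE D hD
    rw [mem_erase, mem_B] at hD
    rw [mem_erase, mem_erase]
    refine ⟨?_, ?_, hgD⟩
    · intro h
      rw [h] at d
      have := tan_uniq I hE hz a h2 b z2 d he2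
      subst this
      have := par_trans I h1 h2 hD.2.1 z1 z2 hD.2.2.2 (Or.inr hp) c
      exact hD.1 (par_eq this e1z m1.1 hD.2.2.1).symm
    · intro h
      rw [h] at d
      have := tan_uniq I hE hz a h1 b z1 d he1
      subst this
      exact hD.1 (par_eq c e1z m1.1 hD.2.2.1).symm
  have hcard : ((E.erase e1).erase e2).card < ((B I e1 z).erase C1).card := by
    rw [card_erase_of_mem (mem_erase.2 ⟨Ne.symm e12, m2.2⟩), card_erase_of_mem m1.2,
      card_erase_of_mem (mem_B.2 ⟨h1, m1.1, z1⟩), card_B I e1z, I.circle_card E hE]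
    have := I.two_le
    omega
  obtain ⟨D, hD, D', hD', hne, heq⟩ := exists_ne_map_eq_of_card_lt_of_maps_to hcard hmaps
  obtain ⟨T, a, b, c, d⟩ := hg D hD
  obtain ⟨T', a', b', c', d'⟩ := hg D' hD'
  rw [← heq] at d'
  have := tan_uniq I hE hz a a' b b' d d'
  subst this
  rw [mem_erase, mem_B] at hD hD'
  have := par_trans I hD.2.1 a hD'.2.1 hD.2.2.2 b hD'.2.2.2 c.symm c'
  exact hne (par_eq this e1z hD.2.2.1 hD'.2.2.1)

/-- `C` is tangent to every circle through `x` and `y`. -/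
def Good (I : InversivePlane q P) (x y : P) (C : Finset P) : Prop :=
  C ∈ I.circles ∧ ∀ D ∈ I.circles, x ∈ D → y ∈ D → (D ∩ C).card = 1

lemma Good.symm {I : InversivePlane q P} {x y : P} {C : Finset P} (h : Good I x y C) :
    Good I y x C := ⟨h.1, fun D hD a b => h.2 D hD b a⟩

lemma Good.not_mem {I : InversivePlane q P} {x y : P} (hxy : x ≠ y) {C : Finset P}
    (h : Good I x y C) : x ∉ C := by
  intro hx
  have hc := I.circle_card C h.1
  have hq := I.two_le
  have : 0 < ((C.erase x).erase y).card := by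
    have := pred_card_le_card_erase (s := C.erase x) (a := y)
    rw [card_erase_of_mem hx] at this
    omega
  obtain ⟨z, hz⟩ := card_pos.1 this
  rw [mem_erase, mem_erase] at hz
  obtain ⟨D, hD, hzD⟩ := exB I hxy (Ne.symm hz.2.1) (Ne.symm hz.1)
  rw [mem_B] at hD
  have h1 := h.2 D hD.1 hD.2.1 hD.2.2
  obtain ⟨w, hw⟩ := card_eq_one.1 h1
  have a : x ∈ D ∩ C := mem_inter.2 ⟨hD.2.1, hx⟩
  have b : z ∈ D ∩ C := mem_inter.2 ⟨hzD, hz.2.2⟩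
  rw [hw, mem_singleton] at a b
  exact hz.2.1 (b.trans a.symm)

lemma Good.unique {I : InversivePlane q P} (hq : Even q) {x y z : P} (hxy : x ≠ y)
    {C1 C2 : Finset P} (h1 : Good I x y C1) (h2 : Good I x y C2) (z1 : z ∈ C1) (z2 : z ∈ C2) :
    C1 = C2 := by
  have hxz : x ≠ z := by rintro rfl; exact h1.not_mem hxy z1
  have hyz : y ≠ z := by rintro rfl; exact h1.symm.not_mem hxy.symm z1
  obtain ⟨D, hDB, hzD⟩ := exB I hxy hxz hyz
  have hD := mem_B.1 hDB
  have key : ∀ C, Good I x y C → z ∈ C → D ∩ C = {z} := by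
    intro C hC hz
    obtain ⟨w, hw⟩ := card_eq_one.1 (hC.2 D hD.1 hD.2.1 hD.2.2)
    have a : z ∈ D ∩ C := mem_inter.2 ⟨hzD, hz⟩
    rw [hw, mem_singleton] at a
    rw [hw, a]
  have hp := par_trans I h1.1 hD.1 h2.1 z1 hzD z2 (Par.symm (Or.inr (key C1 h1 z1)))
    (Or.inr (key C2 h2 z2))
  rcases hp with hp | hp
  · exact hp
  exfalso
  have : 0 < ((B I x y).erase D).card := by
    rw [card_erase_of_mem hDB, card_B I hxy]
    have := I.two_le
    omega
  obtain ⟨E, hE⟩ := card_pos.1 this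
  rw [mem_erase, mem_B] at hE
  obtain ⟨hne, hEc, hxE, hyE⟩ := hE
  have hzE : z ∉ E := fun h => hne (uniq I hxy hxz hyz hEc hD.1 hxE hyE h hD.2.1 hD.2.2 hzD)
  exact no_par I hq hEc hzE h1.1 h2.1 z1 z2 (by rw [inter_comm]; exact h1.2 E hEc hxE hyE)
    (by rw [inter_comm]; exact h2.2 E hEc hxE hyE) hp

/-- The nucleus of a circle in the residue at `x`. -/
lemma nucleus (I : InversivePlane q P) (hq : Even q) {x : P} {C : Finset P}
    (hC : C ∈ I.circles) (hx : x ∉ C) : ∃ n, n ≠ x ∧ Good I x n C := by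
  have hcc := I.circle_card C hC
  have hq2 := I.two_le
  obtain ⟨c1, m1, c2, m2, h12⟩ := one_lt_card.1 (show 1 < C.card by omega)
  obtain ⟨T1, ⟨hT1, i1⟩, -⟩ := tan_ex I hC m1 hx
  obtain ⟨T2, ⟨hT2, i2⟩, -⟩ := tan_ex I hC m2 hx
  rw [mem_B] at hT1 hT2
  have hn : ∃ n, n ≠ x ∧ n ∈ T1 ∧ n ∈ T2 := by
    by_contra hcon
    push Not at hcon
    refine no_par I hq hC hx hT1.1 hT2.1 hT1.2.2 hT2.2.2 (by rw [i1]; simp) (by rw [i2]; simp) ?_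
    ext p
    simp only [mem_inter, mem_singleton]
    constructor
    · rintro ⟨a, b⟩
      by_contra hne
      exact hcon p hne a b
    · rintro rfl; exact ⟨hT1.2.2, hT2.2.2⟩
  obtain ⟨n, hnx, n1, n2⟩ := hn
  have hnC : n ∉ C := by
    intro h
    have a : n ∈ T1 ∩ C := mem_inter.2 ⟨n1, h⟩
    have b : n ∈ T2 ∩ C := mem_inter.2 ⟨n2, h⟩
    rw [i1, mem_singleton] at a
    rw [i2, mem_singleton] at b
    exact h12 (a.symm.trans b)
  have hle : ∀ D ∈ I.circles, x ∈ D → n ∈ D → (D ∩ C).card ≤ 1 := by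
    intro D hD xD nD
    by_contra hcon
    push Not at hcon
    have hex : ∀ p ∈ D.erase n, ∃ c, c ∈ C ∧ ∃ T ∈ I.circles, x ∈ T ∧ T ∩ C = {c} ∧ T ∩ D = {x, p} := by
      intro p hp
      rw [mem_erase] at hp
      have main : ∃ T ∈ I.circles, x ∈ T ∧ (T ∩ C).card = 1 ∧ T ∩ D = {x, p} := by
        by_cases hpx : p = x
        · subst hpx
          obtain ⟨T, a, b, c, d⟩ := tan_par I hq hC hD hx xD
          refine ⟨T, a, b, d, ?_⟩
          rcases c with rfl | c
          · omega
          · rw [c]; simp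
        · obtain ⟨T, a, b, c, d⟩ := tan_pt I hq hC hx hpx
          refine ⟨T, a, b, d, ?_⟩
          have hTD : T ≠ D := by rintro rfl; omega
          symm
          apply eq_of_subset_of_card_le
          · intro w hw
            simp only [mem_insert, mem_singleton] at hw
            rcases hw with rfl | rfl
            · exact mem_inter.2 ⟨b, xD⟩
            · exact mem_inter.2 ⟨c, hp.2⟩
          · rw [card_pair (Ne.symm hpx)]
            exact inter_le I a hD hTD
      obtain ⟨T, a, b, c, d⟩ := main
      obtain ⟨e, he⟩ := card_eq_one.1 c
      have : e ∈ T ∩ C := by rw [he]; simp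
      exact ⟨e, (mem_inter.1 this).2, T, a, b, he, d⟩
    choose! g hgC hg using hex
    have aux : ∀ p ∈ D.erase n, ∀ T ∈ I.circles, x ∈ T → n ∈ T → T ∩ C ≠ {g p} := by
      intro p hp T hT xT nT h
      obtain ⟨T', a, b, c, d⟩ := hg p hp
      have := tan_uniq I hC hx hT a xT b h c
      subst this
      have : n ∈ T ∩ D := mem_inter.2 ⟨nT, nD⟩
      rw [d, mem_insert, mem_singleton] at this
      rcases this with h | h
      · exact hnx h
      · exact (mem_erase.1 hp).1 h.symm
    have hmaps : ∀ p ∈ D.erase n, g p ∈ (C.erase c1).erase c2 := by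
      intro p hp
      rw [mem_erase, mem_erase]
      refine ⟨?_, ?_, hgC p hp⟩
      · intro h
        exact aux p hp T2 hT2.1 hT2.2.2 n2 (by rw [h]; exact i2)
      · intro h
        exact aux p hp T1 hT1.1 hT1.2.2 n1 (by rw [h]; exact i1)
    have hcard : ((C.erase c1).erase c2).card < (D.erase n).card := by
      rw [card_erase_of_mem (mem_erase.2 ⟨Ne.symm h12, m2⟩), card_erase_of_mem m1,
        card_erase_of_mem nD, I.circle_card D hD, hcc]
      omega
    obtain ⟨p, hp, p', hp', hne, heq⟩ := exists_ne_map_eq_of_card_lt_of_maps_to hcard hmaps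
    obtain ⟨T, a, b, c, d⟩ := hg p hp
    obtain ⟨T', a', b', c', d'⟩ := hg p' hp'
    rw [← heq] at c'
    have := tan_uniq I hC hx a a' b b' c c'
    subst this
    rw [d] at d'
    have e1 : p ∈ ({x, p'} : Finset P) := by rw [← d']; simp
    have e2 : p' ∈ ({x, p} : Finset P) := by rw [d']; simp
    simp only [mem_insert, mem_singleton] at e1 e2
    rcases e1 with e1 | e1
    · rcases e2 with e2 | e2
      · exact hne (e1.trans e2.symm)
      · exact hne e2.symm
    · exact hne e1
  refine ⟨n, hnx, hC, fun D hD xD nD => ?_⟩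
  have hl := hle D hD xD nD
  by_contra hne
  have h0 : (D ∩ C).card = 0 := by omega
  rw [card_eq_zero] at h0
  have hex : ∀ c ∈ C, ∃ T, T ∈ (B I x n).erase D ∧ c ∈ T := by
    intro c hc
    obtain ⟨T, hT, h⟩ := exB I (Ne.symm hnx) (show x ≠ c by rintro rfl; exact hx hc)
      (show n ≠ c by rintro rfl; exact hnC hc)
    refine ⟨T, mem_erase.2 ⟨?_, hT⟩, h⟩
    rintro rfl
    have : c ∈ T ∩ C := mem_inter.2 ⟨h, hc⟩
    rw [h0] at this
    simp at this
  choose! g hg hg' using hex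
  have hcard : ((B I x n).erase D).card < C.card := by
    rw [card_erase_of_mem (mem_B.2 ⟨hD, xD, nD⟩), card_B I (Ne.symm hnx), hcc]
    omega
  obtain ⟨c, hc, c', hc', hcne, heq⟩ := exists_ne_map_eq_of_card_lt_of_maps_to hcard hg
  have hT := hg c hc
  rw [mem_erase, mem_B] at hT
  have h1 := hle _ hT.2.1 hT.2.2.1 hT.2.2.2
  have : 1 < (g c ∩ C).card := one_lt_card.2
    ⟨c, mem_inter.2 ⟨hg' c hc, hc⟩, c', mem_inter.2 ⟨by rw [heq]; exact hg' c' hc', hc'⟩, hcne⟩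
  omega

lemma card_through (I : InversivePlane q P) (x : P) :
    (I.circles.filter (fun D => x ∈ D)).card = q * (q + 1) := by
  have hf := flags (I.circles.filter (fun D => x ∈ D)) (univ.erase x)
  have h1 : ∀ D ∈ I.circles.filter (fun D => x ∈ D), (D ∩ univ.erase x).card = q := by
    intro D hD
    rw [mem_filter] at hD
    have : D ∩ univ.erase x = D.erase x := by ext; simp [and_comm]
    rw [this, card_erase_of_mem hD.2, I.circle_card D hD.1]
    omega
  have h2 : ∀ p ∈ univ.erase x,
      ((I.circles.filter (fun D => x ∈ D)).filter (fun D => p ∈ D)).card = q + 1 := by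
    intro p hp
    rw [filter_filter]
    exact card_B I (Ne.symm (mem_erase.1 hp).1)
  rw [Finset.sum_congr rfl h1, Finset.sum_congr rfl h2] at hf
  simp only [sum_const, smul_eq_mul] at hf
  rw [card_erase_of_mem (mem_univ x), Finset.card_univ, I.card_points, Nat.add_sub_cancel] at hf
  have hq := I.two_le
  refine Nat.eq_of_mul_eq_mul_right (show 0 < q by omega) (hf.trans ?_)
  ring

lemma card_circles (I : InversivePlane q P) : I.circles.card = (q ^ 2 + 1) * q := by
  have hf := flags I.circles univ
  have h1 : ∀ D ∈ I.circles, (D ∩ univ).card = q + 1 := by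
    intro D hD
    rw [inter_univ, I.circle_card D hD]
  rw [Finset.sum_congr rfl h1, Finset.sum_congr rfl (fun p _ => card_through I p)] at hf
  simp only [sum_const, smul_eq_mul] at hf
  rw [Finset.card_univ, I.card_points] at hf
  refine Nat.eq_of_mul_eq_mul_right (show 0 < q + 1 by omega) (hf.trans ?_)
  ring

open Classical in
/-- The family of tangent circles. -/
noncomputable def Fam (I : InversivePlane q P) (x y : P) : Finset (Finset P) :=
  I.circles.filter (Good I x y)

lemma mem_Fam {I : InversivePlane q P} {x y : P} {C : Finset P} :
    C ∈ Fam I x y ↔ Good I x y C := by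
  classical
  unfold Fam
  rw [mem_filter]
  exact ⟨fun h => h.2, fun h => ⟨h.1, h⟩⟩

lemma fam_disj (I : InversivePlane q P) (hq : Even q) {x y : P} (hxy : x ≠ y) :
    ∀ C₁ ∈ Fam I x y, ∀ C₂ ∈ Fam I x y, C₁ ≠ C₂ → C₁ ∩ C₂ = ∅ := by
  intro C1 h1 C2 h2 hne
  rw [eq_empty_iff_forall_notMem]
  intro z hz
  rw [mem_inter] at hz
  exact hne (Good.unique hq hxy (mem_Fam.1 h1) (mem_Fam.1 h2) hz.1 hz.2)

lemma fam_union_card (I : InversivePlane q P) (hq : Even q) {x y : P} (hxy : x ≠ y) :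
    ((Fam I x y).biUnion id).card = (Fam I x y).card * (q + 1) := by
  rw [card_biUnion]
  · simp only [id]
    rw [Finset.sum_congr rfl (fun C hC => I.circle_card C (mem_Fam.1 hC).1)]
    simp
  · intro C1 h1 C2 h2 hne
    refine disjoint_iff_inter_eq_empty.2 ?_
    exact fam_disj I hq hxy C1 h1 C2 h2 hne

lemma fam_union_sub (I : InversivePlane q P) {x y : P} (hxy : x ≠ y) :
    (Fam I x y).biUnion id ⊆ univ \ {x, y} := by
  intro z hz
  obtain ⟨C, hC, hzC⟩ := mem_biUnion.1 hz
  rw [mem_Fam] at hC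
  simp only [mem_sdiff, mem_univ, true_and, mem_insert, mem_singleton]
  rintro (rfl | rfl)
  · exact hC.not_mem hxy hzC
  · exact hC.symm.not_mem hxy.symm hzC

lemma card_compl (I : InversivePlane q P) {x y : P} (hxy : x ≠ y) :
    (univ \ {x, y} : Finset P).card = (q - 1) * (q + 1) := by
  rw [Finset.card_sdiff_of_subset (subset_univ _), Finset.card_univ, I.card_points,
    Finset.card_pair hxy]
  have hq := I.two_le
  obtain ⟨k, rfl⟩ : ∃ k, q = k + 2 := ⟨q - 2, by omega⟩
  have : k + 2 - 1 = k + 1 := by omega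
  rw [this]
  have : (k + 2) ^ 2 + 1 = (k + 1) * (k + 2 + 1) + 2 := by ring
  omega

lemma fam_card_le (I : InversivePlane q P) (hq : Even q) {x y : P} (hxy : x ≠ y) :
    (Fam I x y).card ≤ q - 1 := by
  have h := card_le_card (fam_union_sub I hxy)
  rw [fam_union_card I hq hxy, card_compl I hxy] at h
  exact Nat.le_of_mul_le_mul_right h (by omega)

lemma fam_card (I : InversivePlane q P) (hq : Even q) {x y : P} (hxy : x ≠ y) :
    (Fam I x y).card = q - 1 := by
  have hsub : I.circles.filter (fun D => ¬ x ∈ D) ⊆ (univ.erase x).biUnion (Fam I x) := by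
    intro C hC
    rw [mem_filter] at hC
    obtain ⟨n, hn, hg⟩ := nucleus I hq hC.1 hC.2
    exact mem_biUnion.2 ⟨n, mem_erase.2 ⟨hn, mem_univ _⟩, mem_Fam.2 hg⟩
  have h1 := (card_le_card hsub).trans card_biUnion_le
  have h2 := card_filter_add_card_filter_not (s := I.circles) (fun D => x ∈ D)
  rw [card_through, card_circles] at h2
  have hle : ∀ p ∈ univ.erase x, (Fam I x p).card ≤ q - 1 := fun p hp =>
    fam_card_le I hq (Ne.symm (mem_erase.1 hp).1)
  have h3 : ∑ p ∈ univ.erase x, (q - 1) = q ^ 2 * (q - 1) := by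
    rw [sum_const, smul_eq_mul, card_erase_of_mem (mem_univ x), Finset.card_univ, I.card_points,
      Nat.add_sub_cancel]
  have h4 : (I.circles.filter (fun D => ¬ x ∈ D)).card = q ^ 2 * (q - 1) := by
    have hq := I.two_le
    obtain ⟨k, rfl⟩ : ∃ k, q = k + 1 := ⟨q - 1, by omega⟩
    rw [Nat.add_sub_cancel]
    have : ((k + 1) ^ 2 + 1) * (k + 1) = (k + 1) * (k + 1 + 1) + (k + 1) ^ 2 * k := by ring
    omega
  have h5 : ∑ p ∈ univ.erase x, (Fam I x p).card = ∑ p ∈ univ.erase x, (q - 1) :=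
    le_antisymm (sum_le_sum hle) (by rw [h3, ← h4]; exact h1)
  exact (sum_eq_sum_iff_of_le hle).1 h5 y (mem_erase.2 ⟨Ne.symm hxy, mem_univ _⟩)

end InvPl

/-- In an inversive plane of even order `q`, for two distinct points `x, y`,
the family `𝓒ₑ` of circles `C` tangent to every circle through `x` and `y`
has exactly `q - 1` members, and these circles are pairwise disjoint with
union the complement of `{x, y}`. -/
theorem tangent_circles_of_point_pair
    {q : ℕ} {P : Type} [Fintype P] [DecidableEq P]
    (hq : Even q) (I : InversivePlane q P) (x y : P) (hxy : x ≠ y)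
    (Ce : Finset (Finset P))
    (hCe : Ce = I.circles.filter
      (fun C => ∀ D ∈ I.circles, x ∈ D → y ∈ D → (D ∩ C).card = 1)) :
    Ce.card = q - 1 ∧
    (∀ C₁ ∈ Ce, ∀ C₂ ∈ Ce, C₁ ≠ C₂ → C₁ ∩ C₂ = ∅) ∧
    Ce.biUnion id = Finset.univ \ {x, y} := by
  have hF : Ce = InvPl.Fam I x y := by
    ext C
    rw [hCe, InvPl.mem_Fam, Finset.mem_filter]
    rfl
  rw [hF]
  refine ⟨InvPl.fam_card I hq hxy, InvPl.fam_disj I hq hxy, ?_⟩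
  apply Finset.eq_of_subset_of_card_le (InvPl.fam_union_sub I hxy)
  rw [InvPl.fam_union_card I hq hxy, InvPl.fam_card I hq hxy, InvPl.card_compl I hxy]
end

section
/- Let I be an inversive plane of even order q, let x, y be two distinct points of I, and let C₁ ≠ C₂ be two circles of I such that every circle containing both x and y meets each of C₁ and C₂ in exactly one point. Then C₁ ∩ C₂ = ∅. -/
namespace InversivePlane

variable {q : ℕ} {P : Type} [Fintype P] [DecidableEq P]

/-- Two circles sharing three distinct points agree. -/
lemma eq_of_three (I : InversivePlane q P) {C D : Finset P} (hC : C ∈ I.circles)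
    (hD : D ∈ I.circles) {a b c : P} (hab : a ≠ b) (hac : a ≠ c) (hbc : b ≠ c)
    (h1 : a ∈ C) (h2 : b ∈ C) (h3 : c ∈ C) (h4 : a ∈ D) (h5 : b ∈ D) (h6 : c ∈ D) : C = D :=
  (I.three_points a b c hab hac hbc).unique ⟨hC, h1, h2, h3⟩ ⟨hD, h4, h5, h6⟩

lemma exists_three (I : InversivePlane q P) {a b c : P} (hab : a ≠ b) (hac : a ≠ c)
    (hbc : b ≠ c) : ∃ C ∈ I.circles, a ∈ C ∧ b ∈ C ∧ c ∈ C := by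
  obtain ⟨C, ⟨h1, h2⟩, -⟩ := I.three_points a b c hab hac hbc
  exact ⟨C, h1, h2⟩

/-- Residual set: points left over after removing the circles through `p, z` meeting `C` again. -/
lemma residual (I : InversivePlane q P) {C : Finset P} (hC : C ∈ I.circles) {p z : P}
    (hp : p ∈ C) (hz : z ∉ C) :
    ∃ R : Finset P, R.card = q - 1 ∧ (∀ w ∈ R, w ≠ p ∧ w ≠ z) ∧
      ∀ M ∈ I.circles, p ∈ M → z ∈ M →
        ((∀ c ∈ C, c ∈ M → c = p) ↔ ∃ w ∈ R, w ∈ M) ∧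
        ((∀ c ∈ C, c ∈ M → c = p) → (M.erase p).erase z = R) := by
  have h2 := I.two_le
  have hpz : p ≠ z := fun h => hz (h ▸ hp)
  have hK : ∀ c, ∃ K, c ∈ C.erase p → K ∈ I.circles ∧ p ∈ K ∧ z ∈ K ∧ c ∈ K := by
    intro c
    by_cases hc : c ∈ C.erase p
    · rw [Finset.mem_erase] at hc
      obtain ⟨K, h⟩ := I.exists_three (a := p) (b := z) (c := c) hpz (Ne.symm hc.1)
        (fun h => hz (h ▸ hc.2))
      exact ⟨K, fun _ => h⟩
    · exact ⟨∅, fun h => absurd h hc⟩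
  choose K hK using hK
  have hcard : ∀ M ∈ I.circles, p ∈ M → z ∈ M → ((M.erase p).erase z).card = q - 1 := by
    intro M hM h3 h4
    rw [Finset.card_erase_of_mem (Finset.mem_erase.2 ⟨hpz.symm, h4⟩),
      Finset.card_erase_of_mem h3, I.circle_card M hM]
    omega
  let U := (C.erase p).biUnion (fun c => ((K c).erase p).erase z)
  have hU : U.card = q * (q - 1) := by
    rw [Finset.card_biUnion]
    · rw [Finset.sum_congr rfl (fun c hc => hcard (K c) (hK c hc).1 (hK c hc).2.1 (hK c hc).2.2.1),
        Finset.sum_const, Finset.card_erase_of_mem hp, I.circle_card C hC]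
      simp
    · intro c hc d hd hcd
      rw [Function.onFun, Finset.disjoint_left]
      intro w hw hw'
      simp only [Finset.mem_erase] at hw hw'
      have e := I.eq_of_three (hK c hc).1 (hK d hd).1 hpz (Ne.symm hw.2.1) (Ne.symm hw.1)
        (hK c hc).2.1 (hK c hc).2.2.1 hw.2.2 (hK d hd).2.1 (hK d hd).2.2.1 hw'.2.2
      have hc' := Finset.mem_erase.1 hc
      have hd' := Finset.mem_erase.1 hd
      have e2 := I.eq_of_three (hK c hc).1 hC (Ne.symm hc'.1) (Ne.symm hd'.1) hcd
        (hK c hc).2.1 (hK c hc).2.2.2 (e ▸ (hK d hd).2.2.2) hp hc'.2 hd'.2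
      exact hz (e2 ▸ (hK c hc).2.2.1)
  let A := (Finset.univ.erase p).erase z
  have hA : A.card = q ^ 2 + 1 - 1 - 1 := by
    rw [Finset.card_erase_of_mem (Finset.mem_erase.2 ⟨hpz.symm, Finset.mem_univ _⟩),
      Finset.card_erase_of_mem (Finset.mem_univ _), Finset.card_univ, I.card_points]
  have hUA : U ⊆ A := by
    intro w hw
    simp only [U, A, Finset.mem_biUnion, Finset.mem_erase] at hw ⊢
    obtain ⟨c, -, h⟩ := hw
    exact ⟨h.1, h.2.1, Finset.mem_univ _⟩
  have hR : (A \ U).card = q - 1 := by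
    rw [Finset.card_sdiff_of_subset hUA, hA, hU]
    obtain ⟨k, rfl⟩ := Nat.exists_eq_add_of_le h2
    have : 2 + k - 1 = k + 1 := by omega
    rw [this]
    have h : (2 + k) ^ 2 + 1 - 1 - 1 = (2 + k) * (k + 1) + (k + 1) := by
      have : (2 + k) ^ 2 = (2 + k) * (k + 1) + (k + 1) + 1 := by ring
      omega
    omega
  have key : ∀ M ∈ I.circles, p ∈ M → z ∈ M → (∀ c ∈ C, c ∈ M → c = p) →
      (M.erase p).erase z ⊆ A \ U := by
    intro M hM h3 h4 h w hw
    simp only [U, A, Finset.mem_sdiff, Finset.mem_biUnion, Finset.mem_erase] at hw ⊢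
    refine ⟨⟨hw.1, hw.2.1, Finset.mem_univ _⟩, ?_⟩
    rintro ⟨c, hc, hw'⟩
    have hk := hK c (Finset.mem_erase.2 hc)
    have e := I.eq_of_three hk.1 hM hpz (Ne.symm hw.2.1) (Ne.symm hw.1)
      hk.2.1 hk.2.2.1 hw'.2.2 h3 h4 hw.2.2
    exact hc.1 (h c hc.2 (e ▸ hk.2.2.2))
  have key2 : ∀ M ∈ I.circles, p ∈ M → z ∈ M → (∀ c ∈ C, c ∈ M → c = p) →
      (M.erase p).erase z = A \ U := by
    intro M hM h3 h4 h
    exact Finset.eq_of_subset_of_card_le (key M hM h3 h4 h) (by rw [hR, hcard M hM h3 h4])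
  refine ⟨A \ U, hR, ?_, ?_⟩
  · intro w hw
    simp only [A, Finset.mem_sdiff, Finset.mem_erase] at hw
    exact ⟨hw.1.2.1, hw.1.1⟩
  · intro M hM h3 h4
    refine ⟨⟨?_, ?_⟩, key2 M hM h3 h4⟩
    · intro h
      have hne : (A \ U).Nonempty := by
        rw [← Finset.card_pos, hR]; omega
      obtain ⟨w, hw⟩ := hne
      refine ⟨w, hw, ?_⟩
      rw [← key2 M hM h3 h4 h] at hw
      simp only [Finset.mem_erase] at hw
      exact hw.2.2
    · rintro ⟨w, hw, hwM⟩ c hc hcM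
      by_contra hcp
      have hce := Finset.mem_erase.2 ⟨hcp, hc⟩
      have hk := hK c hce
      have e := I.eq_of_three hk.1 hM hpz (Ne.symm hcp) (fun h => hz (h ▸ hc))
        hk.2.1 hk.2.2.1 hk.2.2.2 h3 h4 hcM
      simp only [U, A, Finset.mem_sdiff, Finset.mem_biUnion, Finset.mem_erase] at hw
      exact hw.2 ⟨c, ⟨hcp, hc⟩, hw.1.1, hw.1.2.1, e ▸ hwM⟩

/-- Parallelism of circles through `p` (equal or tangent at `p`). -/
def Par (p : P) (L M : Finset P) : Prop :=
  p ∈ L ∧ p ∈ M ∧ (L = M ∨ ∀ z ∈ L, z ∈ M → z = p)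

lemma Par.symm {p : P} {L M : Finset P} (h : Par p L M) : Par p M L := by
  refine ⟨h.2.1, h.1, ?_⟩
  rcases h.2.2 with h | h
  · exact Or.inl h.symm
  · exact Or.inr fun z h1 h2 => h z h2 h1

lemma Par.eq {p z : P} {L M : Finset P} (h : Par p L M) (hz : z ≠ p) (h1 : z ∈ L)
    (h2 : z ∈ M) : L = M := by
  rcases h.2.2 with h | h
  · exact h
  · exact absurd (h z h1 h2) hz

lemma par_exists (I : InversivePlane q P) {L : Finset P} (hL : L ∈ I.circles) {p z : P}
    (hp : p ∈ L) (hz : z ≠ p) : ∃ M ∈ I.circles, z ∈ M ∧ Par p L M := by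
  by_cases hzL : z ∈ L
  · exact ⟨L, hL, hzL, hp, hp, Or.inl rfl⟩
  obtain ⟨R, hR, hne, h⟩ := I.residual hL hp hzL
  have h2 := I.two_le
  obtain ⟨w, hw⟩ : R.Nonempty := by rw [← Finset.card_pos, hR]; omega
  obtain ⟨M, hM, a, b, c⟩ := I.exists_three hz.symm (hne w hw).1.symm (hne w hw).2.symm
  exact ⟨M, hM, b, hp, a, Or.inr ((h M hM a b).1.2 ⟨w, hw, c⟩)⟩

lemma par_unique (I : InversivePlane q P) {L M N : Finset P} (hL : L ∈ I.circles)
    (hM : M ∈ I.circles) (hN : N ∈ I.circles) {p z : P} (hz : z ≠ p)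
    (h1 : Par p L M) (h2 : Par p L N) (hzM : z ∈ M) (hzN : z ∈ N) : M = N := by
  by_cases hzL : z ∈ L
  · rw [← h1.eq hz hzL hzM, h2.eq hz hzL hzN]
  have a1 : ∀ c ∈ L, c ∈ M → c = p := by
    rcases h1.2.2 with h | h
    · exact absurd (h ▸ hzM) hzL
    · exact h
  have a2 : ∀ c ∈ L, c ∈ N → c = p := by
    rcases h2.2.2 with h | h
    · exact absurd (h ▸ hzN) hzL
    · exact h
  obtain ⟨R, hR, hne, h⟩ := I.residual hL h1.1 hzL
  obtain ⟨w, hw, hwM⟩ := (h M hM h1.2.1 hzM).1.1 a1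
  have hwN : w ∈ (N.erase p).erase z := by rw [(h N hN h2.2.1 hzN).2 a2]; exact hw
  simp only [Finset.mem_erase] at hwN
  exact I.eq_of_three hM hN hz.symm (hne w hw).1.symm (hne w hw).2.symm h1.2.1 hzM hwM
    h2.2.1 hzN hwN.2.2

lemma par_trans (I : InversivePlane q P) {L M N : Finset P} (hL : L ∈ I.circles)
    (hM : M ∈ I.circles) (hN : N ∈ I.circles) {p : P}
    (h1 : Par p L M) (h2 : Par p M N) : Par p L N := by
  refine ⟨h1.1, h2.2.1, ?_⟩
  by_cases h : ∀ z ∈ L, z ∈ N → z = p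
  · exact Or.inr h
  · push Not at h
    obtain ⟨z, a, b, c⟩ := h
    exact Or.inl (I.par_unique hM hL hN c h1.symm h2 a b)

/-- For even order, each parallel class at `p` contains a tangent to a circle `E ∌ p`. -/
lemma exists_tangent (I : InversivePlane q P) (hq : Even q) {L E : Finset P}
    (hL : L ∈ I.circles) (hE : E ∈ I.circles) {p : P} (hp : p ∈ L) (hpE : p ∉ E) :
    ∃ g ∈ E, ∃ M ∈ I.circles, g ∈ M ∧ Par p L M ∧ ∀ z ∈ E, z ∈ M → z = g := by
  by_contra hcon
  push Not at hcon
  have hs : ∀ g, ∃ z, g ∈ E → z ∈ E ∧ z ≠ g ∧ ∃ M ∈ I.circles, Par p L M ∧ g ∈ M ∧ z ∈ M := by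
    intro g
    by_cases hg : g ∈ E
    · obtain ⟨M, hM, a, b⟩ := I.par_exists hL hp (z := g) (fun h => hpE (h ▸ hg))
      obtain ⟨z, c, d, e⟩ := hcon g hg M hM a b
      exact ⟨z, fun _ => ⟨c, e, M, hM, b, a, d⟩⟩
    · exact ⟨g, fun h => absurd h hg⟩
  choose s hs using hs
  have hsum : ∑ _x ∈ E, (1 : ZMod 2) = 0 := by
    refine Finset.sum_involution (fun a _ => s a) ?_ ?_ ?_ ?_
    · intro a _; decide
    · intro a ha _; exact (hs a ha).2.1
    · intro a ha; exact (hs a ha).1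
    · intro a ha
      obtain ⟨h1, h2, M, hM, hpar, h3, h4⟩ := hs a ha
      obtain ⟨k1, k2, N, hN, kpar, k3, k4⟩ := hs (s a) h1
      have e : M = N := I.par_unique hL hM hN (p := p) (z := s a) (fun h => hpE (h ▸ h1)) hpar kpar h4 k3
      by_contra hne
      have e2 := I.eq_of_three hM hE h2 (Ne.symm k2) (Ne.symm hne) h4 h3 (e ▸ k4) h1 ha k1
      exact hpE (e2 ▸ hpar.2.1)
  rw [Finset.sum_const, I.circle_card E hE, nsmul_eq_mul, mul_one, ZMod.natCast_eq_zero_iff] at hsum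
  obtain ⟨k, rfl⟩ := hq
  omega

/-- In even order, circles tangent at `p` have no common tangent circle off `p` . -/
lemma no_common_tangent (I : InversivePlane q P) (hq : Even q) {A B E : Finset P}
    (hA : A ∈ I.circles) (hB : B ∈ I.circles) (hE : E ∈ I.circles) {p a b : P}
    (hpE : p ∉ E) (hAB : Par p A B) (hab : a ≠ b)
    (haE : a ∈ E) (haA : a ∈ A) (hbE : b ∈ E) (hbB : b ∈ B)
    (hA1 : ∀ z ∈ E, z ∈ A → z = a) (hB1 : ∀ z ∈ E, z ∈ B → z = b) : False := by
  have hnp : ∀ g ∈ E, g ≠ p := fun g hg h => hpE (h ▸ hg)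
  have tanuniq : ∀ g ∈ E, ∀ M ∈ I.circles, ∀ N ∈ I.circles, g ∈ M → g ∈ N → p ∈ M → p ∈ N →
      (∀ z ∈ E, z ∈ M → z = g) → (∀ z ∈ E, z ∈ N → z = g) → M = N := by
    intro g hg M hM N hN h1 h2 h3 h4 h5 h6
    exact I.par_unique hE hM hN (hnp g hg).symm ⟨hg, h1, Or.inr h5⟩ ⟨hg, h2, Or.inr h6⟩ h3 h4
  have hg : ∀ f : E, ∃ g : E, ∃ L ∈ I.circles, ∃ M ∈ I.circles, a ∈ L ∧ f.1 ∈ L ∧ Par p L M ∧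
      g.1 ∈ M ∧ (∀ z ∈ E, z ∈ M → z = g.1) ∧ (f.1 = a → L = A ∧ g.1 = b) := by
    rintro ⟨f, hf⟩
    by_cases hfa : f = a
    · subst hfa
      exact ⟨⟨b, hbE⟩, A, hA, B, hB, haA, haA, hAB, hbB, hB1, fun _ => ⟨rfl, rfl⟩⟩
    · obtain ⟨L, hL, h1, h2, h3⟩ := I.exists_three (hnp a haE).symm (hnp f hf).symm (Ne.symm hfa)
      obtain ⟨g, hg, M, hM, h4, h5, h6⟩ := I.exists_tangent hq hL hE h1 hpE
      exact ⟨⟨g, hg⟩, L, hL, M, hM, h2, h3, h5, h4, h6, fun h => absurd h hfa⟩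
  choose g L hL M hM h1 h2 h3 h4 h5 h6 using hg
  -- equal base lines give equal points
  have hLinj : ∀ f f' : E, L f = L f' → f = f' := by
    intro f f' e
    by_contra hne
    have hne' : f.1 ≠ f'.1 := fun h => hne (Subtype.ext h)
    by_cases hfa : f.1 = a
    · exact hne' (hfa.trans (hA1 f'.1 f'.2 ((h6 f hfa).1 ▸ e ▸ h2 f')).symm)
    by_cases hfa' : f'.1 = a
    · exact hne' ((hA1 f.1 f.2 ((h6 f' hfa').1 ▸ e ▸ h2 f)).trans hfa'.symm)
    have e2 := I.eq_of_three (hL f) hE hne' hfa hfa' (h2 f) (e ▸ h2 f') (h1 f) f.2 f'.2 haE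
    exact hpE (e2 ▸ (h3 f).1)
  have hinj : Function.Injective g := by
    intro f f' e
    have eM : M f = M f' := tanuniq (g f).1 (g f).2 _ (hM f) _ (hM f') (h4 f) (e ▸ h4 f')
      (h3 f).2.1 (h3 f').2.1 (h5 f) (e ▸ h5 f')
    have hp1 : Par p (M f) (L f') := by rw [eM]; exact (h3 f').symm
    exact hLinj f f' ((I.par_trans (hL f) (hM f) (hL f') (h3 f) hp1).eq (hnp a haE) (h1 f) (h1 f'))
  obtain ⟨f, hf⟩ := Finite.surjective_of_injective hinj ⟨a, haE⟩
  have hgf : (g f).1 = a := by rw [hf]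
  have eM : M f = A := tanuniq a haE _ (hM f) _ hA (hgf ▸ h4 f) haA
      (h3 f).2.1 hAB.1 (hgf ▸ h5 f) hA1
  have eL : L f = A := by
    have := h3 f
    rw [eM] at this
    exact this.eq (hnp a haE) (h1 f) haA
  have hfa : f.1 = a := hA1 f.1 f.2 (eL ▸ h2 f)
  exact hab (hgf.symm.trans (h6 f hfa).2)

/-- A circle tangent to all circles through `x, y` avoids `x` . -/
lemma not_mem_of_tangent (I : InversivePlane q P) {x y : P} (hxy : x ≠ y) {C : Finset P}
    (hC : C ∈ I.circles)
    (ht : ∀ D ∈ I.circles, x ∈ D → y ∈ D → (D ∩ C).card = 1) : x ∉ C := by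
  intro hx
  have h2 := I.two_le
  obtain ⟨z, hz⟩ : ((C.erase x).erase y).Nonempty := by
    rw [← Finset.card_pos]
    have h := Finset.pred_card_le_card_erase (s := C.erase x) (a := y)
    rw [Finset.card_erase_of_mem hx, I.circle_card C hC] at h
    omega
  simp only [Finset.mem_erase] at hz
  obtain ⟨D, hD, a, b, c⟩ := I.exists_three hxy (Ne.symm hz.2.1) (Ne.symm hz.1)
  have := Finset.card_le_one.1 (ht D hD a b).le x (Finset.mem_inter.2 ⟨a, hx⟩) z
    (Finset.mem_inter.2 ⟨c, hz.2.2⟩)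
  exact hz.2.1 this.symm

end InversivePlane

/-- In an inversive plane of even order `q`, two distinct circles each tangent
to every circle through two distinct points `x, y` are disjoint. -/
theorem tangent_circles_of_point_pair_disjoint
    {q : ℕ} {P : Type} [Fintype P] [DecidableEq P]
    (hq : Even q) (I : InversivePlane q P) (x y : P) (hxy : x ≠ y)
    (C₁ C₂ : Finset P) (hC₁ : C₁ ∈ I.circles) (hC₂ : C₂ ∈ I.circles)
    (hne : C₁ ≠ C₂)
    (htan₁ : ∀ D ∈ I.circles, x ∈ D → y ∈ D → (D ∩ C₁).card = 1)
    (htan₂ : ∀ D ∈ I.circles, x ∈ D → y ∈ D → (D ∩ C₂).card = 1) :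
    C₁ ∩ C₂ = ∅ := by
  have h2 := I.two_le
  rw [Finset.eq_empty_iff_forall_notMem]
  intro p hp
  rw [Finset.mem_inter] at hp
  have hx1 := I.not_mem_of_tangent hxy hC₁ htan₁
  have hy1 := I.not_mem_of_tangent hxy.symm hC₁ (fun D hD a b => htan₁ D hD b a)
  have hxp : x ≠ p := fun h => hx1 (h ▸ hp.1)
  have hyp : y ≠ p := fun h => hy1 (h ▸ hp.1)
  obtain ⟨D, hD, a, b, c⟩ := I.exists_three hxy hxp hyp
  obtain ⟨w, hw⟩ : ∃ w, w ∉ D := by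
    by_contra h
    push Not at h
    have e : D = Finset.univ := Finset.eq_univ_iff_forall.2 h
    have h3 := I.circle_card D hD
    rw [e, Finset.card_univ, I.card_points] at h3
    nlinarith
  obtain ⟨E, hE, a', b', c'⟩ := I.exists_three (c := w) hxy (fun h => hw (h ▸ a))
    (fun h => hw (h ▸ b))
  have hpE : p ∉ E := by
    intro h
    exact hw (I.eq_of_three hE hD hxy hxp hyp a' b' h a b c ▸ c')
  have par1 : InversivePlane.Par p D C₁ := ⟨c, hp.1, Or.inr fun z h3 h4 =>
    Finset.card_le_one.1 (htan₁ D hD a b).le z (Finset.mem_inter.2 ⟨h3, h4⟩) p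
      (Finset.mem_inter.2 ⟨c, hp.1⟩)⟩
  have par2 : InversivePlane.Par p D C₂ := ⟨c, hp.2, Or.inr fun z h3 h4 =>
    Finset.card_le_one.1 (htan₂ D hD a b).le z (Finset.mem_inter.2 ⟨h3, h4⟩) p
      (Finset.mem_inter.2 ⟨c, hp.2⟩)⟩
  have par := I.par_trans hC₁ hD hC₂ par1.symm par2
  obtain ⟨e1, he1⟩ := Finset.card_eq_one.1 (htan₁ E hE a' b')
  obtain ⟨e2, he2⟩ := Finset.card_eq_one.1 (htan₂ E hE a' b')
  have m1 : e1 ∈ E ∩ C₁ := he1 ▸ Finset.mem_singleton_self e1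
  have m2 : e2 ∈ E ∩ C₂ := he2 ▸ Finset.mem_singleton_self e2
  rw [Finset.mem_inter] at m1 m2
  refine I.no_common_tangent hq hC₁ hC₂ hE hpE par (a := e1) (b := e2) ?_ m1.1 m1.2 m2.1 m2.2
    ?_ ?_
  · intro h
    exact hne (par.eq (fun h' => hpE (h' ▸ m1.1)) m1.2 (h ▸ m2.2))
  · intro z h3 h4
    exact Finset.mem_singleton.1 (he1 ▸ Finset.mem_inter.2 ⟨h3, h4⟩)
  · intro z h3 h4
    exact Finset.mem_singleton.1 (he2 ▸ Finset.mem_inter.2 ⟨h3, h4⟩)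
end

section
/- Let I be an inversive plane of even order q, let C be a circle of I, and let x be a point of I with x ∉ C. Then there is a unique point y ≠ x such that every circle of I containing both x and y meets C in exactly one point. -/
namespace NucleusAux

variable {q : ℕ} {P : Type} [Fintype P] [DecidableEq P]

theorem dc (A : Finset (Finset P)) (S : Finset P) :
    ∑ D ∈ A, (D ∩ S).card = ∑ s ∈ S, (A.filter (fun D => s ∈ D)).card := by
  have h1 : ∀ D : Finset P, (D ∩ S).card = ∑ s ∈ S, if s ∈ D then 1 else 0 := by
    intro D
    rw [Finset.inter_comm, ← Finset.filter_mem_eq_inter, Finset.card_filter]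
  simp_rw [h1, Finset.card_filter]
  exact Finset.sum_comm

/-- circles through `x` and `y` -/
def L (I : InversivePlane q P) (x y : P) : Finset (Finset P) :=
  I.circles.filter (fun D => x ∈ D ∧ y ∈ D)

/-- circles through `x` tangent to `C` -/
def T (I : InversivePlane q P) (C : Finset P) (x : P) : Finset (Finset P) :=
  I.circles.filter (fun D => x ∈ D ∧ (D ∩ C).card = 1)

/-- tangents through `x` and `y` -/
def t (I : InversivePlane q P) (C : Finset P) (x y : P) : ℕ :=
  ((T I C x).filter (fun D => y ∈ D)).card

theorem t_eq (I : InversivePlane q P) (C : Finset P) (x y : P) :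
    t I C x y = ((L I x y).filter (fun D => (D ∩ C).card = 1)).card := by
  unfold t T L
  congr 1
  ext D
  simp only [Finset.mem_filter]
  tauto

theorem sum_L (I : InversivePlane q P) {x y : P} (hxy : x ≠ y) (S : Finset P)
    (hx : x ∉ S) (hy : y ∉ S) : ∑ D ∈ L I x y, (D ∩ S).card = S.card := by
  rw [dc, Finset.card_eq_sum_ones]
  refine Finset.sum_congr rfl fun s hs => ?_
  obtain ⟨D, hD, hu⟩ := I.three_points x y s hxy (by rintro rfl; exact hx hs)
    (by rintro rfl; exact hy hs)
  rw [Finset.card_eq_one]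
  refine ⟨D, ?_⟩
  ext E
  simp only [L, Finset.mem_filter, Finset.mem_singleton]
  constructor
  · rintro ⟨⟨h1, h2, h3⟩, h4⟩
    exact hu E ⟨h1, h2, h3, h4⟩
  · rintro rfl
    tauto

theorem eq_of_three (I : InversivePlane q P) {D E : Finset P} (hD : D ∈ I.circles)
    (hE : E ∈ I.circles) {a b c : P} (hab : a ≠ b) (hac : a ≠ c) (hbc : b ≠ c)
    (h : a ∈ D ∧ b ∈ D ∧ c ∈ D) (h' : a ∈ E ∧ b ∈ E ∧ c ∈ E) : D = E :=
  (I.three_points a b c hab hac hbc).unique ⟨hD, h⟩ ⟨hE, h'⟩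

theorem inter_le_two (I : InversivePlane q P) {D E : Finset P} (hD : D ∈ I.circles)
    (hE : E ∈ I.circles) (hne : D ≠ E) : (D ∩ E).card ≤ 2 := by
  by_contra h
  obtain ⟨a, b, c, ha, hb, hc, hab, hac, hbc⟩ := Finset.two_lt_card_iff.1 (not_le.1 h)
  simp only [Finset.mem_inter] at ha hb hc
  exact hne (eq_of_three I hD hE hab hac hbc ⟨ha.1, hb.1, hc.1⟩ ⟨ha.2, hb.2, hc.2⟩)

theorem card_L (I : InversivePlane q P) {x y : P} (hxy : x ≠ y) :
    (L I x y).card = q + 1 := by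
  have h := sum_L I hxy (Finset.univ \ {x, y}) (by simp) (by simp)
  have h2 : (Finset.univ \ {x, y} : Finset P).card = q ^ 2 + 1 - 2 := by
    rw [Finset.card_sdiff_of_subset (Finset.subset_univ _), Finset.card_univ, I.card_points,
      Finset.card_pair hxy]
  have h3 : ∀ D ∈ L I x y, (D ∩ (Finset.univ \ {x, y})).card = q - 1 := by
    intro D hD
    simp only [L, Finset.mem_filter] at hD
    have : D ∩ (Finset.univ \ {x, y}) = D \ {x, y} := by
      ext z; simp
    rw [this, Finset.card_sdiff_of_subset, Finset.card_pair hxy, I.circle_card D hD.1]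
    · omega
    · intro z hz
      simp only [Finset.mem_insert, Finset.mem_singleton] at hz
      rcases hz with rfl | rfl
      · exact hD.2.1
      · exact hD.2.2
  rw [Finset.sum_congr rfl h3, h2, Finset.sum_const, smul_eq_mul] at h
  have hq := I.two_le
  obtain ⟨k, rfl⟩ := Nat.exists_eq_add_of_le hq
  have e1 : 2 + k - 1 = k + 1 := by omega
  have e2 : (2 + k) ^ 2 + 1 - 2 = (k + 3) * (k + 1) := by
    have : (2 + k) ^ 2 + 1 = (k + 3) * (k + 1) + 2 := by ring
    omega
  rw [e1, e2] at h
  have := Nat.eq_of_mul_eq_mul_right (Nat.succ_pos k) h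
  omega

theorem t_on (I : InversivePlane q P) {C : Finset P} (hC : C ∈ I.circles) {x : P} (hx : x ∉ C)
    {c : P} (hc : c ∈ C) : t I C x c = 1 := by
  have hxc : x ≠ c := by rintro rfl; exact hx hc
  have h := sum_L I hxc (C.erase c) (by simp [hx]) (by simp)
  rw [Finset.card_erase_of_mem hc, I.circle_card C hC] at h
  have h3 : ∀ D ∈ L I x c, (D ∩ C.erase c).card + (if (D ∩ C).card = 1 then 1 else 0) = 1 := by
    intro D hD
    simp only [L, Finset.mem_filter] at hD
    have h2 := inter_le_two I hD.1 hC (by rintro rfl; exact hx hD.2.1)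
    have hm : c ∈ D ∩ C := by simp [hD.2.2, hc]
    rw [Finset.inter_erase, Finset.card_erase_of_mem hm]
    have := Finset.card_pos.2 ⟨c, hm⟩
    split_ifs <;> omega
  have h4 := Finset.sum_congr rfl h3
  rw [Finset.sum_add_distrib, h, ← Finset.card_filter, ← t_eq, ← Finset.card_eq_sum_ones,
    card_L I hxc] at h4
  omega

theorem t_off (I : InversivePlane q P) {C : Finset P} (hC : C ∈ I.circles) {x : P} (hx : x ∉ C)
    (hq : Even q) {y : P} (hxy : x ≠ y) (hy : y ∉ C) : Odd (t I C x y) := by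
  have h := sum_L I hxy C hx hy
  rw [I.circle_card C hC] at h
  have h3 : ∀ D ∈ L I x y, (D ∩ C).card =
      2 * (if (D ∩ C).card = 2 then 1 else 0) + (if (D ∩ C).card = 1 then 1 else 0) := by
    intro D hD
    simp only [L, Finset.mem_filter] at hD
    have h2 := inter_le_two I hD.1 hC (by rintro rfl; exact hx hD.2.1)
    split_ifs <;> omega
  rw [Finset.sum_congr rfl h3, Finset.sum_add_distrib, ← Finset.mul_sum, ← Finset.card_filter,
    ← Finset.card_filter, ← t_eq] at h
  rw [Nat.odd_iff]
  rw [Nat.even_iff] at hq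
  omega

theorem t_odd (I : InversivePlane q P) {C : Finset P} (hC : C ∈ I.circles) {x : P} (hx : x ∉ C)
    (hq : Even q) {y : P} (hxy : x ≠ y) : Odd (t I C x y) := by
  by_cases hy : y ∈ C
  · rw [t_on I hC hx hy]; exact odd_one
  · exact t_off I hC hx hq hxy hy

theorem card_T (I : InversivePlane q P) {C : Finset P} (hC : C ∈ I.circles) {x : P} (hx : x ∉ C)
    : (T I C x).card = q + 1 := by
  have h := dc (T I C x) C
  have h1 : ∑ D ∈ T I C x, (D ∩ C).card = ∑ D ∈ T I C x, 1 := by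
    refine Finset.sum_congr rfl fun D hD => ?_
    simp only [T, Finset.mem_filter] at hD
    exact hD.2.2
  have h2 : ∑ s ∈ C, ((T I C x).filter (fun D => s ∈ D)).card = ∑ s ∈ C, 1 :=
    Finset.sum_congr rfl fun c hc => t_on I hC hx hc
  rw [h1, h2] at h
  simpa [I.circle_card C hC] using h

theorem exists_big (I : InversivePlane q P) {C : Finset P} (hC : C ∈ I.circles) {x : P} (hx : x ∉ C)
    (hq : Even q) : ∃ y, x ≠ y ∧ 3 ≤ t I C x y := by
  by_contra! hcon
  have h := dc (T I C x) (Finset.univ.erase x)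
  have h1 : ∑ D ∈ T I C x, (D ∩ Finset.univ.erase x).card = ∑ D ∈ T I C x, q := by
    refine Finset.sum_congr rfl fun D hD => ?_
    simp only [T, Finset.mem_filter] at hD
    rw [Finset.inter_erase, Finset.inter_univ, Finset.card_erase_of_mem hD.2.1,
      I.circle_card D hD.1]
    omega
  have h2 : ∑ s ∈ Finset.univ.erase x, ((T I C x).filter (fun D => s ∈ D)).card
      = ∑ s ∈ Finset.univ.erase x, 1 := by
    refine Finset.sum_congr rfl fun y hy => ?_
    have hxy : x ≠ y := (Finset.ne_of_mem_erase hy).symm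
    have h1 := hcon y hxy
    obtain ⟨k, hk⟩ := t_odd I hC hx hq hxy
    change t I C x y = 1
    omega
  rw [h1, h2, Finset.sum_const, card_T I hC hx, smul_eq_mul, ← Finset.card_eq_sum_ones,
    Finset.card_erase_of_mem (Finset.mem_univ x), Finset.card_univ, I.card_points] at h
  have := I.two_le
  have e : (q + 1) * q = q ^ 2 + q := by ring
  omega

theorem no_secant (I : InversivePlane q P) {C : Finset P} (hC : C ∈ I.circles) {x : P} (hx : x ∉ C)
    (hq : Even q) {y : P} (hxy : x ≠ y) (hy : 3 ≤ t I C x y) {D : Finset P}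
    (hD : D ∈ I.circles) (hxD : x ∈ D) (hyD : y ∈ D) : (D ∩ C).card ≤ 1 := by
  by_contra hcon
  have h := dc (T I C x) (D.erase x)
  have h1 : ∑ E ∈ T I C x, (E ∩ D.erase x).card ≤ ∑ E ∈ T I C x, 1 := by
    refine Finset.sum_le_sum fun E hE => ?_
    simp only [T, Finset.mem_filter] at hE
    have hne : E ≠ D := by rintro rfl; omega
    have := inter_le_two I hE.1 hD hne
    rw [Finset.inter_erase, Finset.card_erase_of_mem (by simp [hE.2.1, hxD])]
    omega
  rw [← Finset.card_eq_sum_ones, card_T I hC hx, h] at h1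
  have hyE : y ∈ D.erase x := by simp [hyD, hxy.symm]
  have h2 : ∑ z ∈ (D.erase x).erase y, 1 ≤ ∑ z ∈ (D.erase x).erase y, t I C x z := by
    refine Finset.sum_le_sum fun z hz => ?_
    have hz' : z ∈ D.erase x := Finset.mem_of_mem_erase hz
    exact (t_odd I hC hx hq (Finset.ne_of_mem_erase hz').symm).pos
  have h3 := Finset.add_sum_erase (D.erase x) (fun z => t I C x z) hyE
  rw [← Finset.card_eq_sum_ones, Finset.card_erase_of_mem hyE, Finset.card_erase_of_mem hxD,
    I.circle_card D hD] at h2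
  change ∑ z ∈ D.erase x, t I C x z ≤ _ at h1
  have := I.two_le
  omega

theorem exists_nucleus (I : InversivePlane q P) {C : Finset P} (hC : C ∈ I.circles) {x : P} (hx : x ∉ C)
    (hq : Even q) :
    ∃ y, y ≠ x ∧ ∀ D ∈ I.circles, x ∈ D → y ∈ D → (D ∩ C).card = 1 := by
  obtain ⟨y, hxy, hy⟩ := exists_big I hC hx hq
  have hyC : y ∉ C := by
    intro h
    rw [t_on I hC hx h] at hy
    omega
  have hle : ∀ D ∈ L I x y, (D ∩ C).card ≤ 1 := by
    intro D hD
    simp only [L, Finset.mem_filter] at hD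
    exact no_secant I hC hx hq hxy hy hD.1 hD.2.1 hD.2.2
  have hs : ∑ D ∈ L I x y, (D ∩ C).card = ∑ D ∈ L I x y, 1 := by
    rw [sum_L I hxy C hx hyC, I.circle_card C hC, ← Finset.card_eq_sum_ones, card_L I hxy]
  have := (Finset.sum_eq_sum_iff_of_le hle).1 hs
  refine ⟨y, hxy.symm, fun D hD h1 h2 => this D ?_⟩
  simp [L, hD, h1, h2]

theorem nucleus_not_mem (I : InversivePlane q P) {C : Finset P} (hC : C ∈ I.circles) {x : P} (hx : x ∉ C)
    {y : P} (hxy : y ≠ x)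
    (h : ∀ D ∈ I.circles, x ∈ D → y ∈ D → (D ∩ C).card = 1) : y ∉ C := by
  intro hy
  have h2 : 1 < C.card := by rw [I.circle_card C hC]; have := I.two_le; omega
  obtain ⟨c, hc, hcy⟩ := Finset.exists_mem_ne h2 y
  obtain ⟨D, ⟨hD, h1, h3, h4⟩, -⟩ := I.three_points x y c hxy.symm
    (by rintro rfl; exact hx hc) hcy.symm
  obtain ⟨a, ha⟩ := Finset.card_eq_one.1 (h D hD h1 h3)
  have e1 : y ∈ D ∩ C := by simp [h3, hy]
  have e2 : c ∈ D ∩ C := by simp [h4, hc]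
  rw [ha, Finset.mem_singleton] at e1 e2
  exact hcy (e2.trans e1.symm)

theorem nucleus_unique (I : InversivePlane q P) {C : Finset P} (hC : C ∈ I.circles) {x : P} (hx : x ∉ C)
    {y z : P} (hxy : y ≠ x) (hxz : z ≠ x)
    (h : ∀ D ∈ I.circles, x ∈ D → y ∈ D → (D ∩ C).card = 1)
    (h' : ∀ D ∈ I.circles, x ∈ D → z ∈ D → (D ∩ C).card = 1) : y = z := by
  by_contra hyz
  have hyC := nucleus_not_mem I hC hx hxy h
  have hzC := nucleus_not_mem I hC hx hxz h'
  obtain ⟨D, ⟨hD, d1, d2, d3⟩, -⟩ := I.three_points x y z hxy.symm hxz.symm hyz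
  have hc : ∃ c ∈ C, c ∉ D := by
    by_contra! hsub
    have := h D hD d1 d2
    rw [Finset.inter_eq_right.2 hsub, I.circle_card C hC] at this
    have := I.two_le
    omega
  obtain ⟨c, hc, hcD⟩ := hc
  have hxc : x ≠ c := by rintro rfl; exact hx hc
  obtain ⟨E, ⟨hE, e1, e2, e3⟩, -⟩ := I.three_points x y c hxy.symm hxc
    (by rintro rfl; exact hyC hc)
  obtain ⟨F, ⟨hF, f1, f2, f3⟩, -⟩ := I.three_points x z c hxz.symm hxc
    (by rintro rfl; exact hzC hc)
  obtain ⟨G, hG⟩ := Finset.card_eq_one.1 (t_on I hC hx hc)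
  have g1 : E ∈ (T I C x).filter (fun D => c ∈ D) := by
    simp [T, hE, e1, e3, h E hE e1 e2]
  have g2 : F ∈ (T I C x).filter (fun D => c ∈ D) := by
    simp [T, hF, f1, f3, h' F hF f1 f2]
  rw [hG, Finset.mem_singleton] at g1 g2
  have hEF : E = F := g1.trans g2.symm
  subst hEF
  have := eq_of_three I hD hE hxy.symm hxz.symm hyz ⟨d1, d2, d3⟩ ⟨e1, e2, f2⟩
  exact hcD (this ▸ e3)

end NucleusAux

/-- In an inversive plane of even order `q`, for every circle `C` and point
`x ∉ C` there is a unique point `y ≠ x` such that every circle through `x`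
and `y` is tangent to `C` (the nucleus property). -/
theorem exists_unique_nucleus_partner
    {q : ℕ} {P : Type} [Fintype P] [DecidableEq P]
    (hq : Even q) (I : InversivePlane q P)
    (C : Finset P) (hC : C ∈ I.circles) (x : P) (hx : x ∉ C) :
    ∃! y, y ≠ x ∧ ∀ D ∈ I.circles, x ∈ D → y ∈ D → (D ∩ C).card = 1 := by
  obtain ⟨y, hy, h⟩ := NucleusAux.exists_nucleus I hC hx hq
  exact ⟨y, ⟨hy, h⟩, fun z hz => NucleusAux.nucleus_unique I hC hx hz.1 hy hz.2 h⟩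
end

section
/- Let π be a finite projective plane of even order n and let C be an oval in π (a set of n+1 points, no three of which lie on a common line). Then there is a unique point x of π such that every line through x meets C in exactly one point; equivalently, the tangent lines to C are precisely the lines through x (this point x is the nucleus of C, and x ∉ C). -/
open Configuration

open Classical in
/-- Counting the points of `S` other than `y` along the lines through `y`. -/
lemma sum_through (P L : Type) [Membership P L] [ProjectivePlane P L] [Fintype P] [Fintype L]
    (S : Finset P) (y : P) (hy : y ∉ S) :
    ∑ l ∈ Finset.univ.filter (fun l : L => y ∈ l), (S.filter (· ∈ l)).card = S.card := by
  have hne : ∀ p ∈ S, y ≠ p := fun p hp h => hy (h ▸ hp)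
  let f : P → L := fun p => if h : y ≠ p then HasLines.mkLine h
    else (Nondegenerate.exists_line (L := L) y).choose
  have hf : ∀ p ∈ S, y ∈ f p ∧ p ∈ f p := by
    intro p hp
    simp only [f, dif_pos (hne p hp)]
    exact HasLines.mkLine_ax (hne p hp)
  rw [Finset.card_eq_sum_card_fiberwise (f := f)
    (t := Finset.univ.filter (fun l : L => y ∈ l))]
  · apply Finset.sum_congr rfl
    intro l hl
    congr 1
    apply Finset.filter_congr
    intro p hp
    simp only [Finset.mem_filter, Finset.mem_univ, true_and] at hl
    constructor
    · intro h
      exact (Nondegenerate.eq_or_eq (hf p hp).1 (hf p hp).2 hl h).resolve_left (hne p hp)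
    · rintro rfl
      exact (hf p hp).2
  · intro p hp
    simpa using (hf p hp).1

open Classical in
lemma card_through (P L : Type) [Membership P L] [ProjectivePlane P L] [Fintype P] [Fintype L]
    (y : P) : (Finset.univ.filter (fun l : L => y ∈ l)).card = ProjectivePlane.order P L + 1 := by
  rw [← ProjectivePlane.lineCount_eq L y, lineCount, Nat.card_eq_fintype_card,
    Fintype.card_subtype]

/-- In a finite projective plane of even order `n`, every oval (a set of
`n + 1` points, no three collinear) has a nucleus: a unique point `x` such
that every line through `x` is tangent to the oval; moreover the tangent
lines to the oval are precisely the lines through `x`, and `x` does not lie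
on the oval. -/
theorem oval_nucleus_of_even_order
    (P L : Type) [Membership P L] [ProjectivePlane P L] [Fintype P] [Fintype L]
    (n : ℕ) (hn : ProjectivePlane.order P L = n) (heven : Even n)
    (C : Finset P) (hcard : C.card = n + 1)
    (harc : ∀ p ∈ C, ∀ q ∈ C, ∀ r ∈ C, p ≠ q → p ≠ r → q ≠ r →
      ¬ ∃ l : L, p ∈ l ∧ q ∈ l ∧ r ∈ l) :
    -- there is a unique point all of whose lines are tangent to `C`
    (∃! x : P, ∀ l : L, x ∈ l → {p : P | p ∈ C ∧ p ∈ l}.ncard = 1) ∧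
    -- for this point `x`, the tangent lines to `C` are exactly the lines
    -- through `x`, and `x ∉ C`
    (∃ x : P, x ∉ C ∧
      (∀ l : L, x ∈ l → {p : P | p ∈ C ∧ p ∈ l}.ncard = 1) ∧
      (∀ l : L, {p : P | p ∈ C ∧ p ∈ l}.ncard = 1 ↔ x ∈ l)) := by
  classical
  have hnc : ∀ l : L, {p : P | p ∈ C ∧ p ∈ l}.ncard = (C.filter (· ∈ l)).card := by
    intro l
    rw [← Set.ncard_coe_finset]
    congr 1
    ext p
    simp
  simp only [hnc]
  -- every line meets `C` in at most two points
  have hle2 : ∀ l : L, (C.filter (· ∈ l)).card ≤ 2 := by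
    intro l
    by_contra! h
    obtain ⟨a, b, c, ha, hb, hc, hab, hac, hbc⟩ := Finset.two_lt_card_iff.mp h
    simp only [Finset.mem_filter] at ha hb hc
    exact harc a ha.1 b hb.1 c hc.1 hab hac hbc ⟨l, ha.2, hb.2, hc.2⟩
  have hthr : ∀ y : P, (Finset.univ.filter (fun l : L => y ∈ l)).card = n + 1 := by
    intro y
    rw [card_through, hn]
  -- through each point of `C` there is a unique tangent
  have htan : ∀ p ∈ C, ∃! l : L, p ∈ l ∧ (C.filter (· ∈ l)).card = 1 := by
    intro p hp
    have h1 := sum_through P L (C.erase p) p (Finset.notMem_erase p C)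
    rw [Finset.card_erase_of_mem hp, hcard] at h1
    have h2 : ∀ l ∈ Finset.univ.filter (fun l : L => p ∈ l),
        ((C.erase p).filter (· ∈ l)).card + 1 = (C.filter (· ∈ l)).card := by
      intro l hl
      simp only [Finset.mem_filter, Finset.mem_univ, true_and] at hl
      rw [Finset.filter_erase, Finset.card_erase_add_one]
      simp [hp, hl]
    have h3 : ((Finset.univ.filter (fun l : L => p ∈ l)).filter
        (fun l => (C.filter (· ∈ l)).card = 1)).card
        + ∑ l ∈ Finset.univ.filter (fun l : L => p ∈ l), ((C.erase p).filter (· ∈ l)).card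
        = (Finset.univ.filter (fun l : L => p ∈ l)).card := by
      rw [Finset.card_filter, ← Finset.sum_add_distrib, Finset.card_eq_sum_ones]
      apply Finset.sum_congr rfl
      intro l hl
      have := h2 l hl
      have := hle2 l
      split_ifs <;> omega
    rw [h1, hthr] at h3
    have h4 : ((Finset.univ.filter (fun l : L => p ∈ l)).filter
        (fun l => (C.filter (· ∈ l)).card = 1)).card = 1 := by omega
    obtain ⟨t, ht⟩ := Finset.card_eq_one.mp h4
    have key : ∀ l, (p ∈ l ∧ (C.filter (· ∈ l)).card = 1) ↔ l = t := by
      intro l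
      have : l ∈ ((Finset.univ.filter (fun l : L => p ∈ l)).filter
        (fun l => (C.filter (· ∈ l)).card = 1)) ↔ l ∈ ({t} : Finset L) := by rw [ht]
      simpa only [Finset.mem_filter, Finset.mem_univ, true_and, Finset.mem_singleton] using this
    exact ⟨t, (key t).2 rfl, fun l hl => (key l).1 hl⟩
  -- every point lies on a tangent
  have hcov : ∀ y : P, ∃ l : L, y ∈ l ∧ (C.filter (· ∈ l)).card = 1 := by
    intro y
    by_cases hy : y ∈ C
    · exact (htan y hy).exists
    · by_contra! hno
      have h1 := sum_through P L C y hy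
      have h2 : Even (∑ l ∈ Finset.univ.filter (fun l : L => y ∈ l),
          (C.filter (· ∈ l)).card) := by
        apply Finset.even_sum
        intro l hl
        simp only [Finset.mem_filter, Finset.mem_univ, true_and] at hl
        have h3 := hno l hl
        have h4 := hle2 l
        have h5 : (C.filter (· ∈ l)).card = 0 ∨ (C.filter (· ∈ l)).card = 2 := by omega
        rcases h5 with h | h <;> rw [h] <;> decide
      rw [h1, hcard] at h2
      obtain ⟨a, ha⟩ := heven
      obtain ⟨b, hb⟩ := h2
      omega
  -- a tangent has a point of `C` on it
  have hpt : ∀ l : L, (C.filter (· ∈ l)).card = 1 → ∃ p ∈ C, p ∈ l := by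
    intro l hl
    obtain ⟨p, hp⟩ := Finset.card_pos.mp (by omega : 0 < (C.filter (· ∈ l)).card)
    simp only [Finset.mem_filter] at hp
    exact ⟨p, hp⟩
  -- two tangents do not meet on a non-tangent line
  have hsec : ∀ m t₁ t₂ : L, ∀ x : P, (C.filter (· ∈ m)).card ≠ 1 →
      (C.filter (· ∈ t₁)).card = 1 → (C.filter (· ∈ t₂)).card = 1 →
      x ∈ m → x ∈ t₁ → x ∈ t₂ → t₁ = t₂ := by
    intro m t₁ t₂ x hm h₁ h₂ hxm hx₁ hx₂
    choose g hg hgu using fun p : C => htan p.1 p.2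
    have hgm : ∀ p, g p ≠ m := fun p h => hm (h ▸ (hg p).2)
    have hgt : ∀ t : L, (C.filter (· ∈ t)).card = 1 → ∃ p, g p = t := by
      intro t ht
      obtain ⟨p, hp, hpt'⟩ := hpt t ht
      exact ⟨⟨p, hp⟩, (hgu ⟨p, hp⟩ t ⟨hpt', ht⟩).symm⟩
    let f : C → {q : P // q ∈ m} := fun p =>
      ⟨HasPoints.mkPoint (hgm p), (HasPoints.mkPoint_ax (hgm p)).2⟩
    have hf : ∀ p (q : {q : P // q ∈ m}), q.1 ∈ g p → f p = q := by
      intro p q hq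
      apply Subtype.ext
      exact (Nondegenerate.eq_or_eq (HasPoints.mkPoint_ax (hgm p)).1 hq
        (HasPoints.mkPoint_ax (hgm p)).2 q.2).resolve_right (hgm p)
    have hsurj : Function.Surjective f := by
      intro q
      obtain ⟨l, hql, hl⟩ := hcov q.1
      obtain ⟨p, rfl⟩ := hgt l hl
      exact ⟨p, hf p q hql⟩
    have hc : Fintype.card C = Fintype.card {q : P // q ∈ m} := by
      rw [Fintype.card_coe, hcard, ← Nat.card_eq_fintype_card, ← hn]
      exact (ProjectivePlane.pointCount_eq P m).symm
    have hbij := (Fintype.bijective_iff_surjective_and_card f).2 ⟨hsurj, hc⟩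
    obtain ⟨p₁, rfl⟩ := hgt t₁ h₁
    obtain ⟨p₂, rfl⟩ := hgt t₂ h₂
    rw [hbij.1 ((hf p₁ ⟨x, hxm⟩ hx₁).trans (hf p₂ ⟨x, hxm⟩ hx₂).symm)]
  have hn1 : 1 < n := hn ▸ ProjectivePlane.one_lt_order P L
  -- two distinct tangents
  obtain ⟨t₁, t₂, hne, h₁, h₂⟩ : ∃ t₁ t₂ : L, t₁ ≠ t₂ ∧ (C.filter (· ∈ t₁)).card = 1 ∧
      (C.filter (· ∈ t₂)).card = 1 := by
    obtain ⟨a, ha, b, hb, hab⟩ := Finset.one_lt_card.mp (by omega : 1 < C.card)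
    obtain ⟨t₁, ha₁, h₁⟩ := (htan a ha).exists
    obtain ⟨t₂, hb₂, h₂⟩ := (htan b hb).exists
    refine ⟨t₁, t₂, ?_, h₁, h₂⟩
    rintro rfl
    exact hab (Finset.card_le_one.mp h₁.le a (by simp [ha, ha₁]) b (by simp [hb, hb₂]))
  obtain ⟨x, ⟨hx₁, hx₂⟩, -⟩ := HasPoints.existsUnique_point P L t₁ t₂ hne
  have hxC : x ∉ C := fun h => hne ((htan x h).unique ⟨hx₁, h₁⟩ ⟨hx₂, h₂⟩)
  have hall : ∀ l : L, x ∈ l → (C.filter (· ∈ l)).card = 1 := by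
    intro l hl
    by_contra h
    exact hne (hsec l t₁ t₂ x h h₁ h₂ hl hx₁ hx₂)
  have hiff : ∀ l : L, (C.filter (· ∈ l)).card = 1 ↔ x ∈ l := by
    intro l
    refine ⟨fun h => ?_, hall l⟩
    obtain ⟨p, hp, hpl⟩ := hpt l h
    have hxp : x ≠ p := fun e => hxC (e ▸ hp)
    obtain ⟨k, ⟨hxk, hpk⟩, -⟩ := HasLines.existsUnique_line P L x p hxp
    rw [(htan p hp).unique ⟨hpl, h⟩ ⟨hpk, hall k hxk⟩]
    exact hxk
  refine ⟨⟨x, hall, ?_⟩, x, hxC, hall, hiff⟩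
  intro y hy
  by_contra hyx
  have hlc : 1 < (Finset.univ.filter (fun l : L => y ∈ l)).card := by rw [hthr]; omega
  obtain ⟨a, ha, b, hb, hab⟩ := Finset.one_lt_card.mp hlc
  simp only [Finset.mem_filter, Finset.mem_univ, true_and] at ha hb
  exact (Nondegenerate.eq_or_eq ha ((hiff a).1 (hy a ha)) hb ((hiff b).1 (hy b hb))).elim hyx hab
end

section
/- Let F be a finite field with q elements and B a nondegenerate alternating bilinear form on V = F⁴. Then W(q) is a regular generalized quadrangle of order (q,q); explicitly: (1) every totally isotropic two-dimensional subspace of V contains exactly q+1 points of ℙ(F, V); (2) every point of ℙ(F, V) is contained in exactly q+1 totally isotropic two-dimensional subspaces; (3) any two distinct points of ℙ(F, V) lie in at most one common totally isotropic two-dimensional subspace; (4) for every point x and totally isotropic two-dimensional subspace ℓ not containing x, there is a unique point y in ℓ collinear with x; and (5) every pair of non-collinear points of W(q) is regular. -/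
section WqHelpers
variable {F : Type} [Field F]

lemma wq_sub_le (x : Projectivization F (Fin 4 → F)) (M : Submodule F (Fin 4 → F)) :
    x.submodule ≤ M ↔ x.rep ∈ M := by
  rw [x.submodule_eq, Submodule.span_singleton_le_iff_mem]

lemma wq_count [Fintype F] (M : Submodule F (Fin 4 → F)) (hM : Module.finrank F M = 2) :
    {x : Projectivization F (Fin 4 → F) | x.submodule ≤ M}.ncard = Fintype.card F + 1 := by
  have h : {x : Projectivization F (Fin 4 → F) | x.submodule ≤ M} =
      Set.range (Projectivization.map M.subtype M.injective_subtype) := by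
    ext x
    simp only [Set.mem_ofPred_eq, Set.mem_range, wq_sub_le]
    constructor
    · intro hx
      refine ⟨Projectivization.mk F ⟨x.rep, hx⟩ ?_, ?_⟩
      · intro h
        exact x.rep_nonzero (congrArg Subtype.val h)
      · rw [Projectivization.map_mk]
        exact x.mk_rep
    · rintro ⟨y, rfl⟩
      induction y using Projectivization.ind with
      | h v hv =>
        rw [← wq_sub_le, Projectivization.map_mk, Projectivization.submodule_mk,
          Submodule.span_singleton_le_iff_mem]
        exact v.2
  rw [h, ← Set.image_univ,
    Set.ncard_image_of_injective _ (Projectivization.map_injective _ _), Set.ncard_univ,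
    Projectivization.card_of_finrank_two F M hM, Nat.card_eq_fintype_card]

lemma wq_symm (B : LinearMap.BilinForm F (Fin 4 → F)) (halt : ∀ v, B v v = 0) : B.IsRefl :=
  LinearMap.IsAlt.isRefl (B := B) halt

lemma wq_nondeg (B : LinearMap.BilinForm F (Fin 4 → F))
    (hnd : ∀ v, (∀ w, B v w = 0) → v = 0) (halt : ∀ v, B v v = 0) : B.Nondegenerate := by
  refine ⟨hnd, fun v h => hnd v fun w => wq_symm B halt _ _ (h w)⟩

lemma wq_rank_perp (B : LinearMap.BilinForm F (Fin 4 → F))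
    (hnd : ∀ v, (∀ w, B v w = 0) → v = 0) (halt : ∀ v, B v v = 0)
    (W : Submodule F (Fin 4 → F)) :
    Module.finrank F (B.orthogonal W) = 4 - Module.finrank F W := by
  rw [LinearMap.BilinForm.finrank_orthogonal (wq_nondeg B hnd halt)]
  simp

lemma wq_mem_perp (B : LinearMap.BilinForm F (Fin 4 → F)) (x v : Fin 4 → F) :
    v ∈ B.orthogonal (F ∙ x) ↔ B x v = 0 := by
  rw [LinearMap.BilinForm.orthogonal_span_singleton_eq_toLin_ker, LinearMap.mem_ker]
  rfl

/-- A 2-space not inside the hyperplane `x^⊥` meets it in a line. -/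
lemma wq_meet (B : LinearMap.BilinForm F (Fin 4 → F))
    (hnd : ∀ v, (∀ w, B v w = 0) → v = 0) (halt : ∀ v, B v v = 0)
    (x : Fin 4 → F) (M : Submodule F (Fin 4 → F))
    (hM : Module.finrank F M = 2) (h : ¬ M ≤ B.orthogonal (F ∙ x)) :
    Module.finrank F (M ⊓ B.orthogonal (F ∙ x) : Submodule F (Fin 4 → F)) = 1 := by
  have h1 := Submodule.finrank_sup_add_finrank_inf_eq M (B.orthogonal (F ∙ x))
  have h2 : Module.finrank F (M ⊓ B.orthogonal (F ∙ x) : Submodule F (Fin 4 → F)) <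
      Module.finrank F M := Submodule.finrank_lt_finrank_of_lt (inf_lt_left.2 h)
  have h3 := wq_rank_perp B hnd halt (F ∙ x)
  have h4 : Module.finrank F (F ∙ x) ≤ 1 := by
    simpa using finrank_span_le_card (R := F) ({x} : Set (Fin 4 → F))
  have h5 := Submodule.finrank_le (M ⊔ B.orthogonal (F ∙ x))
  simp only [Module.finrank_fin_fun] at h5
  omega

lemma wq_hyp_disj (B : LinearMap.BilinForm F (Fin 4 → F)) (halt : ∀ v, B v v = 0)
    (x y : Fin 4 → F) (h : B x y ≠ 0) :
    Disjoint ((F ∙ x) ⊔ (F ∙ y)) (B.orthogonal ((F ∙ x) ⊔ (F ∙ y))) := by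
  rw [Submodule.disjoint_def]
  intro v hv hv'
  obtain ⟨a, ha, b, hb, rfl⟩ := Submodule.mem_sup.1 hv
  obtain ⟨s, rfl⟩ := Submodule.mem_span_singleton.1 ha
  obtain ⟨t, rfl⟩ := Submodule.mem_span_singleton.1 hb
  have h1 : B x (s • x + t • y) = 0 :=
    hv' x (Submodule.mem_sup_left (Submodule.mem_span_singleton_self x))
  have h2 : B y (s • x + t • y) = 0 :=
    hv' y (Submodule.mem_sup_right (Submodule.mem_span_singleton_self y))
  have h' : B y x ≠ 0 := fun e => h (wq_symm B halt _ _ e)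
  simp [halt, h] at h1
  simp [halt, h'] at h2
  simp [h1, h2]

lemma wq_hyp_rank (B : LinearMap.BilinForm F (Fin 4 → F)) (halt : ∀ v, B v v = 0)
    (x y : Fin 4 → F) (h : B x y ≠ 0) :
    Module.finrank F ((F ∙ x) ⊔ (F ∙ y) : Submodule F (Fin 4 → F)) = 2 := by
  have hx : x ≠ 0 := by rintro rfl; simp at h
  have hy : y ≠ 0 := by rintro rfl; simp at h
  have h0 : (F ∙ x) ⊓ (F ∙ y) = ⊥ := by
    rw [eq_bot_iff]
    rintro v ⟨h1, h2⟩
    obtain ⟨s, rfl⟩ := Submodule.mem_span_singleton.1 h1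
    obtain ⟨t, ht⟩ := Submodule.mem_span_singleton.1 h2
    have h3 := congrArg (B x) ht
    simp [halt, h] at h3
    simp [← ht, h3]
  have h1 := Submodule.finrank_sup_add_finrank_inf_eq (F ∙ x) (F ∙ y)
  rw [h0, finrank_span_singleton hx, finrank_span_singleton hy, finrank_bot] at h1
  omega

end WqHelpers


/-- For a finite field `F` with `q` elements and a nondegenerate alternating
bilinear form `B` on `V = F⁴`, the incidence system `W(q)` — points the
points of `ℙ(F, V)`, lines the totally isotropic two-dimensional subspaces
of `V` — is a regular generalized quadrangle of order `(q, q)`: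
(1) every line has `q + 1` points; (2) every point is on `q + 1` lines;
(3) two distinct points are on at most one common line; (4) for every
non-incident point-line pair `(x, ℓ)` there is a unique point of `ℓ`
collinear with `x`; (5) every non-collinear pair of points is regular
(its span has `q + 1` elements).  Here two distinct points are collinear
iff `B` vanishes on their representatives. -/
theorem Wq_is_regular_generalized_quadrangle
    {q : ℕ} (F : Type) [Field F] [Fintype F] (hF : Fintype.card F = q)
    (B : (Fin 4 → F) →ₗ[F] (Fin 4 → F) →ₗ[F] F)
    -- `B` is nondegenerate
    (hnd : ∀ v, (∀ w, B v w = 0) → v = 0)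
    -- `B` is alternating
    (halt : ∀ v, B v v = 0) :
    -- (1) every totally isotropic 2-dimensional subspace carries `q + 1` points
    (∀ M : Submodule F (Fin 4 → F), Module.finrank F M = 2 →
        (∀ v ∈ M, ∀ w ∈ M, B v w = 0) →
        {x : Projectivization F (Fin 4 → F) | x.submodule ≤ M}.ncard = q + 1) ∧
    -- (2) every point lies in `q + 1` totally isotropic 2-dimensional subspaces
    (∀ x : Projectivization F (Fin 4 → F),
        {M : Submodule F (Fin 4 → F) | Module.finrank F M = 2 ∧
          (∀ v ∈ M, ∀ w ∈ M, B v w = 0) ∧ x.submodule ≤ M}.ncard = q + 1) ∧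
    -- (3) two distinct points lie in at most one common totally isotropic
    -- 2-dimensional subspace
    (∀ x y : Projectivization F (Fin 4 → F), x ≠ y →
        ∀ M₁ M₂ : Submodule F (Fin 4 → F),
          Module.finrank F M₁ = 2 → (∀ v ∈ M₁, ∀ w ∈ M₁, B v w = 0) →
          Module.finrank F M₂ = 2 → (∀ v ∈ M₂, ∀ w ∈ M₂, B v w = 0) →
          x.submodule ≤ M₁ → y.submodule ≤ M₁ →
          x.submodule ≤ M₂ → y.submodule ≤ M₂ → M₁ = M₂) ∧
    -- (4) the generalized quadrangle axiom
    (∀ (x : Projectivization F (Fin 4 → F)) (M : Submodule F (Fin 4 → F)),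
        Module.finrank F M = 2 → (∀ v ∈ M, ∀ w ∈ M, B v w = 0) →
        ¬ x.submodule ≤ M →
        ∃! y : Projectivization F (Fin 4 → F),
          y.submodule ≤ M ∧ y ≠ x ∧ B x.rep y.rep = 0) ∧
    -- (5) every non-collinear pair is regular: its span has `q + 1` points
    (∀ x y : Projectivization F (Fin 4 → F), x ≠ y → B x.rep y.rep ≠ 0 →
        {z : Projectivization F (Fin 4 → F) |
          ∀ w ∈ {w : Projectivization F (Fin 4 → F) |
              w ≠ x ∧ w ≠ y ∧ B w.rep x.rep = 0 ∧ B w.rep y.rep = 0},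
            z ≠ w ∧ B z.rep w.rep = 0}.ncard = q + 1) := by
  subst hF
  have hsym : ∀ v w, B v w = 0 → B w v = 0 := wq_symm B halt
  refine ⟨fun M hM _ => wq_count M hM, ?_, ?_, ?_, ?_⟩
  · intro x
    obtain ⟨y, hy⟩ : ∃ y, B x.rep y ≠ 0 := by
      by_contra! hc
      exact x.rep_nonzero (hnd _ hc)
    set H : Submodule F (Fin 4 → F) := (F ∙ x.rep) ⊔ (F ∙ y) with hH
    set N := LinearMap.BilinForm.orthogonal B H with hN
    have hHr : Module.finrank F H = 2 := wq_hyp_rank B halt _ _ hy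
    have hNr : Module.finrank F N = 2 := by
      rw [hN, wq_rank_perp B hnd halt, hHr]
    have hdis : Disjoint H N := wq_hyp_disj B halt _ _ hy
    have hdis' : x.submodule ⊓ N = ⊥ := by
      rw [← disjoint_iff]
      refine hdis.mono_left ?_
      rw [x.submodule_eq]
      exact le_sup_left
    have hNmem : ∀ v, v ∈ N ↔ B x.rep v = 0 ∧ B y v = 0 := by
      intro v
      rw [← wq_mem_perp B, ← wq_mem_perp B, ← Submodule.mem_inf]
      constructor
      · intro h
        exact ⟨LinearMap.BilinForm.orthogonal_le le_sup_left h,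
          LinearMap.BilinForm.orthogonal_le le_sup_right h⟩
      · rintro ⟨h1, h2⟩ w hw
        obtain ⟨a, ha, b, hb, rfl⟩ := Submodule.mem_sup.1 hw
        have e1 : B a v = 0 := h1 a ha
        have e2 : B b v = 0 := h2 b hb
        change B (a + b) v = 0
        simp [e1, e2]
    have hrk : ∀ p : Projectivization F (Fin 4 → F), p.submodule ≤ N →
        Module.finrank F (x.submodule ⊔ p.submodule : Submodule F (Fin 4 → F)) = 2 := by
      intro p hp
      have h1 := Submodule.finrank_sup_add_finrank_inf_eq x.submodule p.submodule
      have h2 : x.submodule ⊓ p.submodule = ⊥ :=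
        eq_bot_iff.2 (hdis' ▸ inf_le_inf_left _ hp)
      rw [h2, x.finrank_submodule, p.finrank_submodule, finrank_bot] at h1
      omega
    have himg : {M : Submodule F (Fin 4 → F) | Module.finrank F M = 2 ∧
          (∀ v ∈ M, ∀ w ∈ M, B v w = 0) ∧ x.submodule ≤ M} =
        (fun p : Projectivization F (Fin 4 → F) => x.submodule ⊔ p.submodule) ''
          {p | p.submodule ≤ N} := by
      ext M
      constructor
      · rintro ⟨h1, h2, h3⟩
        have hxM : x.rep ∈ M := (wq_sub_le x M).1 h3
        have hMy : ¬ M ≤ LinearMap.BilinForm.orthogonal B (F ∙ y) := by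
          intro h
          exact hy (hsym _ _ ((wq_mem_perp B y x.rep).1 (h hxM)))
        have hr := wq_meet B hnd halt y M h1 hMy
        have hle : M ⊓ LinearMap.BilinForm.orthogonal B (F ∙ y) ≤ N := by
          rintro v ⟨hv1, hv2⟩
          exact (hNmem v).2 ⟨h2 _ hxM _ hv1, (wq_mem_perp B y v).1 hv2⟩
        refine ⟨Projectivization.mk'' _ hr, ?_, ?_⟩
        · simpa using hle
        · refine Submodule.eq_of_le_of_finrank_eq ?_ ?_
          · simpa using h3
          · rw [h1]
            exact hrk _ (by simpa using hle)
      · rintro ⟨p, hp, rfl⟩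
        refine ⟨hrk p hp, ?_, le_sup_left⟩
        have hxp : B x.rep p.rep = 0 := ((hNmem _).1 ((wq_sub_le p N).1 hp)).1
        have hpx := hsym _ _ hxp
        intro v hv w hw
        simp only [Projectivization.submodule_eq] at hv hw
        obtain ⟨a, ha, b, hb, rfl⟩ := Submodule.mem_sup.1 hv
        obtain ⟨s, rfl⟩ := Submodule.mem_span_singleton.1 ha
        obtain ⟨t, rfl⟩ := Submodule.mem_span_singleton.1 hb
        obtain ⟨a', ha', b', hb', rfl⟩ := Submodule.mem_sup.1 hw
        obtain ⟨s', rfl⟩ := Submodule.mem_span_singleton.1 ha'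
        obtain ⟨t', rfl⟩ := Submodule.mem_span_singleton.1 hb'
        simp [halt, hxp, hpx]
    rw [himg, Set.ncard_image_of_injOn, wq_count N hNr]
    intro p hp p' hp' h
    have key : ∀ p : Projectivization F (Fin 4 → F), p.submodule ≤ N →
        (x.submodule ⊔ p.submodule) ⊓ N = p.submodule := by
      intro p hp
      rw [sup_comm, sup_inf_assoc_of_le _ hp, hdis', sup_bot_eq]
    apply Projectivization.submodule_injective
    rw [← key p hp, ← key p' hp']
    exact congrArg (· ⊓ N) h
  · intro x y hxy M₁ M₂ h1 _ h2 _ hx1 hy1 hx2 hy2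
    have hinf : x.submodule ⊓ y.submodule = ⊥ := by
      by_contra hc
      have hpos : 0 < Module.finrank F (x.submodule ⊓ y.submodule : Submodule F (Fin 4 → F)) := by
        rw [Nat.pos_iff_ne_zero]
        intro h0
        exact hc (Submodule.finrank_eq_zero.1 h0)
      have e1 : x.submodule ⊓ y.submodule = x.submodule :=
        Submodule.eq_of_le_of_finrank_le inf_le_left (by rw [x.finrank_submodule]; exact hpos)
      have e2 : x.submodule ⊓ y.submodule = y.submodule :=
        Submodule.eq_of_le_of_finrank_le inf_le_right (by rw [y.finrank_submodule]; exact hpos)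
      exact hxy (Projectivization.submodule_injective (e1.symm.trans e2))
    have hr := Submodule.finrank_sup_add_finrank_inf_eq x.submodule y.submodule
    rw [hinf, x.finrank_submodule, y.finrank_submodule, finrank_bot] at hr
    have e1 : x.submodule ⊔ y.submodule = M₁ :=
      Submodule.eq_of_le_of_finrank_eq (sup_le hx1 hy1) (by omega)
    have e2 : x.submodule ⊔ y.submodule = M₂ :=
      Submodule.eq_of_le_of_finrank_eq (sup_le hx2 hy2) (by omega)
    exact e1.symm.trans e2
  · intro x M hM hiso hx
    have hperp : M = LinearMap.BilinForm.orthogonal B M := by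
      refine Submodule.eq_of_le_of_finrank_eq (fun v hv w hw => hiso w hw v hv) ?_
      rw [wq_rank_perp B hnd halt, hM]
    have hnot : ¬ M ≤ LinearMap.BilinForm.orthogonal B (F ∙ x.rep) := by
      intro h
      apply hx
      rw [wq_sub_le, hperp]
      intro v hv
      exact hsym _ _ ((wq_mem_perp B _ _).1 (h hv))
    have hr := wq_meet B hnd halt x.rep M hM hnot
    have hiff : ∀ y : Projectivization F (Fin 4 → F),
        (y.submodule ≤ M ∧ y ≠ x ∧ B x.rep y.rep = 0) ↔
        y.submodule ≤ M ⊓ LinearMap.BilinForm.orthogonal B (F ∙ x.rep) := by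
      intro y
      rw [le_inf_iff, wq_sub_le y (LinearMap.BilinForm.orthogonal B (F ∙ x.rep)), wq_mem_perp]
      constructor
      · rintro ⟨h1, _, h2⟩
        exact ⟨h1, h2⟩
      · rintro ⟨h1, h2⟩
        exact ⟨h1, fun e => hx (e ▸ h1), h2⟩
    simp only [hiff]
    refine ⟨Projectivization.mk'' _ hr, by simp, ?_⟩
    intro y hy
    apply Projectivization.submodule_injective
    rw [Projectivization.submodule_mk'']
    exact Submodule.eq_of_le_of_finrank_eq hy (by rw [hr, y.finrank_submodule])
  · intro x y _ hB
    set H : Submodule F (Fin 4 → F) := (F ∙ x.rep) ⊔ (F ∙ y.rep) with hH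
    have hHr : Module.finrank F H = 2 := wq_hyp_rank B halt _ _ hB
    have hdis : Disjoint H (LinearMap.BilinForm.orthogonal B H) := wq_hyp_disj B halt _ _ hB
    have hw : ∀ w : Projectivization F (Fin 4 → F),
        (w ≠ x ∧ w ≠ y ∧ B w.rep x.rep = 0 ∧ B w.rep y.rep = 0) ↔
        w.rep ∈ LinearMap.BilinForm.orthogonal B H := by
      intro w
      constructor
      · rintro ⟨-, -, h1, h2⟩ v hv
        obtain ⟨a, ha, b, hb, rfl⟩ := Submodule.mem_sup.1 hv
        obtain ⟨s, rfl⟩ := Submodule.mem_span_singleton.1 ha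
        obtain ⟨t, rfl⟩ := Submodule.mem_span_singleton.1 hb
        change B (s • x.rep + t • y.rep) w.rep = 0
        simp [hsym _ _ h1, hsym _ _ h2]
      · intro h
        have h1 : B x.rep w.rep = 0 :=
          h _ (Submodule.mem_sup_left (Submodule.mem_span_singleton_self _))
        have h2 : B y.rep w.rep = 0 :=
          h _ (Submodule.mem_sup_right (Submodule.mem_span_singleton_self _))
        refine ⟨?_, ?_, hsym _ _ h1, hsym _ _ h2⟩
        · rintro rfl
          exact hB (hsym _ _ h2)
        · rintro rfl
          exact hB h1
    rw [← wq_count H hHr]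
    congr 1
    ext z
    simp only [Set.mem_ofPred_eq, hw, wq_sub_le]
    constructor
    · intro h
      rw [← LinearMap.BilinForm.orthogonal_orthogonal (wq_nondeg B hnd halt) (wq_symm B halt) H]
      intro v hv
      change B v z.rep = 0
      by_cases hv0 : v = 0
      · simp [hv0]
      obtain ⟨a, ha⟩ := Projectivization.exists_smul_eq_mk_rep F v hv0
      have h1 := (h (Projectivization.mk F v hv0)
        (by rw [← ha]; exact Submodule.smul_mem _ _ hv)).2
      rw [← ha] at h1
      apply hsym
      simpa [Units.smul_def] using h1
    · intro hz w hwp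
      refine ⟨?_, hsym _ _ ?_⟩
      · rintro rfl
        exact z.rep_nonzero (Submodule.disjoint_def.1 hdis _ hz hwp)
      · exact hsym _ _ (hwp _ hz)
end
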